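/- Let τ₁ > 2 and let Ψ : (0,∞) → (0,∞) be given by Ψ(q) = q^{−τ₁}. If ω : (0,∞) → (0,∞) is given by ω(q) = q^{−τ₂} for some τ₂ with 0 < τ₂ < τ₁(τ₁ − 2), then dim_H(E(Ψ,ω)) = 2/(τ₁ + τ₂). -/

import Mathlib

/-!
Write `σ = τ₁ + τ₂`.  For a fraction `p/q` the set `(1 - ω q) Ψ q ≤ |y - p/q| ≤ Ψ q` consists of two
intervals of length `ω q · Ψ q = q^(-σ)`.

*Upper bound.*  A point of `E(Ψ, ω)` satisfies the lower inequality for all large `q` and the upper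
one infinitely often, so it lies in infinitely many of these intervals.  In a bounded region there
are `O(q)` of them for each `q`, and `∑ q · q^(-σ d)` converges for `d > 2/σ` (`dimH_ESet_le`).

*Lower bound.*  Attach to each rational `ρ` of denominator `q` the right-hand interval `cell ρ`, and
call `ρ'` a successor of `ρ` (`IsChild`) if `cell ρ' ⊆ cell ρ` and no point of `cell ρ'` is too close
to a fraction with denominator in `(q, ρ'.den]`.  The limit of an infinite chain of successors lies
in `E(Ψ, ω)` (`mem_ESet_of_chain`).

Every `ρ` with large denominator has at least `κ q^(-σ) N²` successors with denominators in
`[κ N, N]`, for all large `N` (`exists_supply`).  To see this, discard from the cell its bad points,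
which lie within `2 s^(-τ₁)` of a fraction `r/s` with `s > q`.  Because `p/q` repels other fractions,
only `s ≥ q^(τ₁ - 1)/2` occur, and a dyadic union bound shows that they spoil at most an eighth of
the cell: the largest of these balls has radius about `q^(-τ₁(τ₁-1))`, which is negligible against
the length `q^(-σ)` exactly because `τ₂ < τ₁(τ₁ - 2)` (`eventually_bad_small`).  Dirichlet's theorem
places a rational of denominator `k ≤ N` within `1/(k N)` of each remaining point.  Denominators
`k < N/96` account for a small proportion of the cell, so there must be many rationals with
`k ≥ N/96`; these are successors (`isChild_of_not_bad`, `supply_core`).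

Choosing the same number of successors for all nodes of a generation, and `N` growing fast, gives a
tree whose paths are the mixed-radix expansions of the numbers in `[0, 1)`.  Rationals with
denominators at most `N` are `1/N²`-separated, and from this the map sending a limit point to the
number encoded by its path is seen to be Hölder of any given exponent `s < 2/σ`; so the limit set has
dimension at least `s` (`le_dimH_of_supply`).
-/

open Filter Set

/-- A real number `x` is `Ψ`-approximable: `|x - p/q| ≤ Ψ q` for infinitely many
pairs `(p, q) ∈ ℤ × ℕ` (with `q > 0`).  `WSet Ψ` is the set `W(Ψ)` of such `x`. -/
def WSet (Ψ : ℝ → ℝ) : Set ℝ :=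
  {x : ℝ | {pq : ℤ × ℕ | 0 < pq.2 ∧ |x - (pq.1 : ℝ) / (pq.2 : ℝ)| ≤ Ψ (pq.2 : ℝ)}.Infinite}

/-- `ESet Ψ ω` is the set `E(Ψ, ω)` of `x ∈ W(Ψ)` such that for all sufficiently large
`q ∈ ℕ` one has `|x - p/q| ≥ (1 - ω q) * Ψ q` for every `p ∈ ℤ`. -/
def ESet (Ψ ω : ℝ → ℝ) : Set ℝ :=
  {x : ℝ | x ∈ WSet Ψ ∧ ∃ Q : ℕ, ∀ q : ℕ, Q ≤ q → ∀ p : ℤ,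
    (1 - ω (q : ℝ)) * Ψ (q : ℝ) ≤ |x - (p : ℝ) / (q : ℝ)|}

/-! ### The upper bound -/

open MeasureTheory MeasureTheory.Measure in
/-- The covering argument on a unit interval, for points which satisfy the lower inequality for all
`q ≥ Q₀`. -/
theorem up_piece (τ₁ τ₂ : ℝ) (hτ₁ : 2 < τ₁) (hτ₂pos : 0 < τ₂) (d : NNReal)
    (hd : 2 / (τ₁ + τ₂) < d) (n : ℤ) (Q₀ : ℕ) (A : Set ℝ)
    (hAW : A ⊆ WSet (fun q : ℝ => q ^ (-τ₁))) (hAn : A ⊆ Icc (n : ℝ) (n + 1))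
    (hA : ∀ x ∈ A, ∀ q : ℕ, Q₀ ≤ q → ∀ p : ℤ,
      (1 - (q : ℝ) ^ (-τ₂)) * (q : ℝ) ^ (-τ₁) ≤ |x - (p : ℝ) / (q : ℝ)|) :
    dimH A ≤ d := by
  have hσ : 0 < τ₁ + τ₂ := by linarith
  have hdσ : 2 < (τ₁ + τ₂) * d := by
    rw [div_lt_iff₀ hσ] at hd; linarith
  have hd0 : (0 : ℝ) < d := lt_of_le_of_lt (by positivity) hd
  let ι : ℕ → Type := fun Q => Σ i : ℕ, Fin (Q + i + 4) × Bool
  -- The two components of `{y | (1 - ω q) Ψ q ≤ |y - p/q| ≤ Ψ q}`.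
  let J : ℕ → ℤ → Bool → Set ℝ := fun q p b =>
    if b then Icc ((p : ℝ) / q + (1 - (q : ℝ) ^ (-τ₂)) * (q : ℝ) ^ (-τ₁))
        ((p : ℝ) / q + (q : ℝ) ^ (-τ₁))
    else Icc ((p : ℝ) / q - (q : ℝ) ^ (-τ₁))
        ((p : ℝ) / q - (1 - (q : ℝ) ^ (-τ₂)) * (q : ℝ) ^ (-τ₁))
  have hJ : ∀ q : ℕ, 0 < q → ∀ p b,
      Metric.ediam (J q p b) = ENNReal.ofReal ((q : ℝ) ^ (-(τ₁ + τ₂))) := by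
    intro q hq p b
    have hq' : (0 : ℝ) < q := by exact_mod_cast hq
    have e : (q : ℝ) ^ (-(τ₁ + τ₂)) = (q : ℝ) ^ (-τ₂) * (q : ℝ) ^ (-τ₁) := by
      rw [← Real.rpow_add hq']; ring_nf
    cases b <;> simp only [J, if_true, Bool.false_eq_true, if_false, Real.ediam_Icc, e] <;>
      congr 1 <;> ring
  let t : ∀ Q : ℕ, ι Q → Set ℝ := fun Q i =>
    J (Q + i.1 + 1) (n * ((Q + i.1 + 1 : ℕ) : ℤ) + (i.2.1 : ℕ) - 1) i.2.2
  have hr : Tendsto (fun Q : ℕ => ENNReal.ofReal (((Q + 1 : ℕ) : ℝ) ^ (-(τ₁ + τ₂)))) atTop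
      (nhds 0) := by
    rw [← ENNReal.ofReal_zero]
    refine ENNReal.tendsto_ofReal ?_
    exact (tendsto_rpow_neg_atTop hσ).comp
      (tendsto_natCast_atTop_atTop.comp (tendsto_add_atTop_nat 1))
  have hcov : ∀ Q, Q₀ ≤ Q → A ⊆ ⋃ i, t Q i := by
    intro Q hQ x hx
    have hinf := hAW hx
    obtain ⟨⟨p, q⟩, ⟨hq0, hpq⟩, hqQ⟩ :
        ∃ pq ∈ {pq : ℤ × ℕ | 0 < pq.2 ∧ |x - (pq.1 : ℝ) / (pq.2 : ℝ)| ≤ (pq.2 : ℝ) ^ (-τ₁)},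
          Q < pq.2 := by
      by_contra! hcon
      -- Only finitely many pairs have denominator at most `Q`.
      refine hinf (Set.Finite.subset
        ((Set.finite_Icc (-(⌈|x| + 1⌉ * (Q : ℤ))) (⌈|x| + 1⌉ * (Q : ℤ))).prod
          (Set.finite_Icc 0 Q)) ?_)
      rintro ⟨p, q⟩ hpq
      have h1 := hcon _ hpq
      obtain ⟨hq0, hpq⟩ := hpq
      simp only at hq0 hpq h1
      have hq' : (0 : ℝ) < q := by exact_mod_cast hq0
      have h2 : (q : ℝ) ^ (-τ₁) ≤ 1 :=
        Real.rpow_le_one_of_one_le_of_nonpos (by exact_mod_cast hq0) (by linarith)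
      have h3 : |(p : ℝ) / q| ≤ |x| + 1 := by
        have := abs_sub_abs_le_abs_sub ((p : ℝ) / q) x
        rw [abs_sub_comm] at this; linarith
      have h4 : |(p : ℝ)| ≤ (⌈|x| + 1⌉ : ℝ) * Q := by
        rw [abs_div, abs_of_pos hq', div_le_iff₀ hq'] at h3
        refine h3.trans ?_
        have : (q : ℝ) ≤ Q := by exact_mod_cast h1
        have := Int.le_ceil (|x| + 1)
        gcongr
      have h5 : |p| ≤ ⌈|x| + 1⌉ * (Q : ℤ) := by exact_mod_cast h4
      exact ⟨abs_le.1 h5, ⟨Nat.zero_le _, h1⟩⟩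
    simp only at hq0 hpq hqQ
    have hq' : (0 : ℝ) < q := by exact_mod_cast hq0
    have hlow := hA x hx q (by omega) p
    have hxn := hAn hx
    -- `|p - q x| ≤ q ^ (1 - τ₁) ≤ 1`
    have h2 : |x * q - p| ≤ 1 := by
      have : x * q - p = (x - p / q) * q := by field_simp
      rw [this, abs_mul, abs_of_pos hq']
      calc |x - p / q| * q ≤ (q : ℝ) ^ (-τ₁) * q := by gcongr
        _ = (q : ℝ) ^ (-τ₁ + 1) := by rw [Real.rpow_add hq', Real.rpow_one]
        _ ≤ 1 := Real.rpow_le_one_of_one_le_of_nonpos (by exact_mod_cast hq0) (by linarith)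
    have h3 := abs_le.1 h2
    have h4 : n * (q : ℤ) - 1 ≤ p := by
      have : (n : ℝ) * q - 1 ≤ p := by nlinarith [hxn.1]
      exact_mod_cast this
    have h5 : p ≤ n * (q : ℤ) + q + 1 := by
      have : (p : ℝ) ≤ n * q + q + 1 := by nlinarith [hxn.2]
      exact_mod_cast this
    obtain ⟨i, rfl⟩ : ∃ i, q = Q + i + 1 := ⟨q - Q - 1, by omega⟩
    obtain ⟨j, hj⟩ : ∃ j : ℕ, p = n * ((Q + i + 1 : ℕ) : ℤ) + j - 1 :=
      ⟨(p - n * ((Q + i + 1 : ℕ) : ℤ) + 1).toNat, by omega⟩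
    have hjlt : j < Q + i + 4 := by omega
    have hab := abs_le.1 hpq
    rw [mem_iUnion]
    rcases le_total 0 (x - (p : ℝ) / ((Q + i + 1 : ℕ) : ℝ)) with h | h
    · refine ⟨⟨i, ⟨j, hjlt⟩, true⟩, ?_⟩
      rw [abs_of_nonneg h] at hlow
      simp only [t, J, if_true, ← hj]
      constructor <;> linarith [hab.1, hab.2]
    · refine ⟨⟨i, ⟨j, hjlt⟩, false⟩, ?_⟩
      rw [abs_of_nonpos h] at hlow
      simp only [t, J, Bool.false_eq_true, if_false, ← hj]
      constructor <;> linarith [hab.1, hab.2]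
  have key := hausdorffMeasure_le_liminf_tsum (d : ℝ) A _ hr t
    (Eventually.of_forall fun Q i => by
      simp only [t]
      rw [hJ _ (by omega)]
      apply ENNReal.ofReal_le_ofReal
      apply Real.rpow_le_rpow_of_nonpos (by positivity) _ (by linarith)
      push_cast; linarith [show (0 : ℝ) ≤ (i.1 : ℝ) by positivity])
    (eventually_atTop.2 ⟨Q₀, hcov⟩)
  let f : ℕ → ENNReal := fun k => ENNReal.ofReal (8 * ((k + 1 : ℕ) : ℝ) ^ (1 - (τ₁ + τ₂) * d))
  have hf : ∑' k, f k ≠ ⊤ := by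
    have hs : Summable fun k : ℕ => 8 * ((k + 1 : ℕ) : ℝ) ^ (1 - (τ₁ + τ₂) * d) := by
      refine Summable.mul_left 8 ?_
      exact (summable_nat_add_iff 1).2 (Real.summable_nat_rpow.2 (by linarith))
    rw [← ENNReal.ofReal_tsum_of_nonneg (fun k => by positivity) hs]
    exact ENNReal.ofReal_ne_top
  have hsum : ∀ Q, ∑' i, Metric.ediam (t Q i) ^ (d : ℝ) ≤ ∑' i, f (i + Q) := by
    intro Q
    refine (ENNReal.tsum_sigma' _).trans_le (ENNReal.tsum_le_tsum fun i => ?_)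
    simp only [t]
    have hq' : (0 : ℝ) < ((Q + i + 1 : ℕ) : ℝ) := by positivity
    simp_rw [hJ (Q + i + 1) (by omega)]
    rw [tsum_fintype, Finset.sum_const, Finset.card_univ, Fintype.card_prod, Fintype.card_fin,
      Fintype.card_bool, nsmul_eq_mul, ENNReal.ofReal_rpow_of_pos (by positivity),
      ← Real.rpow_mul hq'.le, ← ENNReal.ofReal_natCast, ← ENNReal.ofReal_mul (by positivity)]
    apply ENNReal.ofReal_le_ofReal
    rw [show i + Q + 1 = Q + i + 1 by omega, sub_eq_add_neg, Real.rpow_add hq', Real.rpow_one,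
      neg_mul, ← mul_assoc]
    gcongr
    push_cast
    linarith [show (0 : ℝ) ≤ i by positivity, show (0 : ℝ) ≤ Q by positivity]
  have h0 : Tendsto (fun Q => ∑' i, Metric.ediam (t Q i) ^ (d : ℝ)) atTop (nhds 0) :=
    tendsto_of_tendsto_of_tendsto_of_le_of_le tendsto_const_nhds
      (ENNReal.tendsto_sum_nat_add f hf) (fun _ => zero_le) hsum
  rw [h0.liminf_eq] at key
  exact dimH_le_of_hausdorffMeasure_ne_top (by rw [le_antisymm key zero_le]; simp)

theorem dimH_ESet_le (τ₁ τ₂ : ℝ) (hτ₁ : 2 < τ₁) (hτ₂pos : 0 < τ₂) :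
    dimH (ESet (fun q : ℝ => q ^ (-τ₁)) (fun q : ℝ => q ^ (-τ₂))) ≤
      ENNReal.ofReal (2 / (τ₁ + τ₂)) := by
  refine ENNReal.le_of_forall_pos_le_add ?_
  intro ε hε _
  set E := ESet (fun q : ℝ => q ^ (-τ₁)) (fun q : ℝ => q ^ (-τ₂))
  let A : ℤ × ℕ → Set ℝ := fun nQ => {x | x ∈ WSet (fun q : ℝ => q ^ (-τ₁)) ∧
    x ∈ Icc (nQ.1 : ℝ) (nQ.1 + 1) ∧ ∀ q : ℕ, nQ.2 ≤ q → ∀ p : ℤ,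
      (1 - (q : ℝ) ^ (-τ₂)) * (q : ℝ) ^ (-τ₁) ≤ |x - (p : ℝ) / (q : ℝ)|}
  have hE : E ⊆ ⋃ nQ, A nQ := by
    rintro x ⟨hx, Q, hQ⟩
    exact mem_iUnion.2 ⟨(⌊x⌋, Q), hx, ⟨Int.floor_le x, (Int.lt_floor_add_one x).le⟩, hQ⟩
  refine (dimH_mono hE).trans ?_
  rw [dimH_iUnion]
  refine iSup_le fun nQ => ?_
  have := up_piece τ₁ τ₂ hτ₁ hτ₂pos (Real.toNNReal (2 / (τ₁ + τ₂)) + ε) (by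
    have : 0 ≤ 2 / (τ₁ + τ₂) := by positivity
    push_cast
    rw [Real.coe_toNNReal _ this]
    linarith [NNReal.coe_pos.2 hε]) nQ.1 nQ.2 (A nQ) (fun x hx => hx.1) (fun x hx => hx.2.1)
    (fun x hx => hx.2.2)
  simpa [ENNReal.ofReal] using this

/-! ### Cells, successors and the tree -/

/-- The right-hand component of `{y | (1 - ω q) Ψ q ≤ |y - ρ| ≤ Ψ q}`, where `q` is the reduced
denominator of the rational `ρ`. -/
def cell (τ₁ τ₂ : ℝ) (ρ : ℚ) : Set ℝ :=
  Icc ((ρ : ℝ) + (1 - (ρ.den : ℝ) ^ (-τ₂)) * (ρ.den : ℝ) ^ (-τ₁)) ((ρ : ℝ) + (ρ.den : ℝ) ^ (-τ₁))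

/-- `ρ'` is an admissible successor of `ρ`: its cell is contained in that of `ρ`, and no point of
its cell is approximated too well by a fraction whose denominator lies in `(ρ.den, ρ'.den]`. -/
def IsChild (τ₁ τ₂ : ℝ) (ρ ρ' : ℚ) : Prop :=
  ρ.den < ρ'.den ∧ cell τ₁ τ₂ ρ' ⊆ cell τ₁ τ₂ ρ ∧
    ∀ y ∈ cell τ₁ τ₂ ρ', ∀ s : ℕ, ρ.den < s → s ≤ ρ'.den → ∀ r : ℤ,
      (1 - (s : ℝ) ^ (-τ₂)) * (s : ℝ) ^ (-τ₁) ≤ |y - (r : ℝ) / (s : ℝ)|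

theorem cell_nonempty (τ₁ τ₂ : ℝ) (ρ : ℚ) : (cell τ₁ τ₂ ρ).Nonempty := by
  refine nonempty_Icc.2 ?_
  have h1 : 0 ≤ (ρ.den : ℝ) ^ (-τ₁) := by positivity
  have h2 : 0 ≤ (ρ.den : ℝ) ^ (-τ₂) := by positivity
  nlinarith

/-- The limit point of an infinite chain of successors lies in `ESet`. -/
theorem mem_ESet_of_chain (τ₁ τ₂ : ℝ) (ρ : ℕ → ℚ) (hρ : ∀ k, IsChild τ₁ τ₂ (ρ k) (ρ (k + 1)))
    (h1 : ∀ k, (ρ k).den ^ (-τ₂) ≤ (1 : ℝ)) (x : ℝ) (hx : ∀ k, x ∈ cell τ₁ τ₂ (ρ k)) :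
    x ∈ ESet (fun q : ℝ => q ^ (-τ₁)) (fun q : ℝ => q ^ (-τ₂)) := by
  have hmono : StrictMono fun k => (ρ k).den := strictMono_nat_of_lt_succ fun k => (hρ k).1
  constructor
  · have hinj : Function.Injective fun k => ((ρ k).num, (ρ k).den) := by
      intro a b hab
      exact hmono.injective (Prod.ext_iff.1 hab).2
    refine Set.Infinite.mono ?_ (Set.infinite_range_of_injective hinj)
    rintro _ ⟨k, rfl⟩
    refine ⟨(ρ k).den_pos, ?_⟩
    have h := hx k
    have e : (((ρ k).num : ℤ) : ℝ) / ((ρ k).den : ℝ) = (ρ k : ℝ) := by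
      exact_mod_cast (Rat.cast_def (K := ℝ) (ρ k)).symm
    simp only [e]
    have h2 : 0 ≤ ((ρ k).den : ℝ) ^ (-τ₁) := by positivity
    have h3 : 0 ≤ (1 - ((ρ k).den : ℝ) ^ (-τ₂)) * ((ρ k).den : ℝ) ^ (-τ₁) :=
      mul_nonneg (by linarith [h1 k]) h2
    have h4 := h.1
    have h5 := h.2
    rw [abs_le]; constructor <;> linarith
  · refine ⟨(ρ 0).den + 1, fun q hq p => ?_⟩
    have hex : ∃ k, q ≤ (ρ k).den := ⟨q, hmono.id_le q⟩
    classical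
    obtain ⟨k, hk⟩ : ∃ k, Nat.find hex = k + 1 :=
      Nat.exists_eq_succ_of_ne_zero fun h0 => by
        have := Nat.find_spec hex; rw [h0] at this; omega
    have hk1 : q ≤ (ρ (k + 1)).den := hk ▸ Nat.find_spec hex
    have hk2 : ¬ q ≤ (ρ k).den := Nat.find_min hex (by omega)
    exact (hρ k).2.2 x (hx _) q (by omega) hk1 p

theorem rat_sep (a b : ℚ) (N : ℕ) (ha : a.den ≤ N) (hb : b.den ≤ N) (h : a < b) :
    1 / (N : ℝ) ^ 2 ≤ (b : ℝ) - a := by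
  have had : (0 : ℝ) < a.den := by exact_mod_cast a.den_pos
  have hbd : (0 : ℝ) < b.den := by exact_mod_cast b.den_pos
  have ea := Rat.cast_def (K := ℝ) a
  have eb := Rat.cast_def (K := ℝ) b
  have h' : (a : ℝ) < b := by exact_mod_cast h
  rw [ea, eb, div_lt_div_iff₀ had hbd] at h'
  have h2 : a.num * b.den + 1 ≤ b.num * a.den := by
    have : a.num * b.den < b.num * a.den := by exact_mod_cast h'
    omega
  have h3 : (a.num : ℝ) * b.den + 1 ≤ b.num * a.den := by exact_mod_cast h2
  have h4 : (b : ℝ) - a = (b.num * a.den - a.num * b.den) / (a.den * b.den) := by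
    rw [ea, eb]; field_simp
  rw [h4, div_le_div_iff₀ (by have : (0:ℝ) < N := lt_of_lt_of_le had (by exact_mod_cast ha)
                              positivity) (by positivity)]
  have h5 : (a.den : ℝ) * b.den ≤ N ^ 2 := by
    rw [sq]; gcongr
  nlinarith

theorem rat_sep_seq (e : ℕ → ℚ) (m N : ℕ) (hden : ∀ j < m, (e j).den ≤ N)
    (hmono : ∀ i j, i < j → j < m → e i < e j) (i j : ℕ) (hij : i < j) (hj : j < m) :
    ((j : ℝ) - i) / (N : ℝ) ^ 2 ≤ (e j : ℝ) - e i := by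
  induction j, hij using Nat.le_induction with
  | base =>
    have := rat_sep (e i) (e (i + 1)) N (hden _ (by omega)) (hden _ hj) (hmono _ _ (by omega) hj)
    push_cast; simpa using this
  | succ j hij ih =>
    have h1 := ih (by omega)
    have h2 := rat_sep (e j) (e (j + 1)) N (hden _ (by omega)) (hden _ hj)
      (hmono _ _ (by omega) hj)
    push_cast
    have : ((j : ℝ) + 1 - i) / (N : ℝ) ^ 2 = (j - i) / (N : ℝ) ^ 2 + 1 / (N : ℝ) ^ 2 := by ring
    linarith

/-- A generation of the construction: `M` rationals `node 0, …, node (M - 1)` with denominators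
at most `N`. -/
structure Level where
  M : ℕ
  N : ℕ
  node : ℕ → ℚ

/-- Invariants of a generation: denominators in `[q₀, N]`, and enough nodes for the Hölder
estimate with exponent `s`. -/
structure Level.Good (L : Level) (q₀ : ℕ) (κ σ s C : ℝ) : Prop where
  pos : 0 < L.M
  le_den : ∀ i < L.M, q₀ ≤ (L.node i).den
  den_le : ∀ i < L.M, (L.node i).den ≤ L.N
  growth : C * (4 / κ * (L.N : ℝ) ^ σ) ^ s ≤ L.M

/-- `L'` refines `L` by giving each node exactly `m` successors, listed in increasing order; the
successors of node `i` have the indices `j` with `j / m = i`. -/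
structure Level.Step (τ₁ τ₂ κ σ : ℝ) (L L' : Level) (m : ℕ) : Prop where
  two_le : 2 ≤ m
  M_eq : L'.M = L.M * m
  N_pos : 0 < L'.N
  child : ∀ i < L'.M, IsChild τ₁ τ₂ (L.node (i / m)) (L'.node i)
  many : κ * (L.N : ℝ) ^ (-σ) * (L'.N : ℝ) ^ 2 ≤ m
  sep : ∀ i j, i < j → j < L'.M → i / m = j / m →
    ((j : ℝ) - i) / (L'.N : ℝ) ^ 2 ≤ (L'.node j : ℝ) - L'.node i
  small : ∀ i < L'.M, ((L'.node i).den : ℝ) ^ (-τ₁) ≤ 1 / (2 * (L'.N : ℝ) ^ 2)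

/-- The supply of successors on which the construction feeds: a node of denominator `q` has at
least `κ q^(-σ) N²` successors with denominators in `[κ N, N]`, for every large `N`. -/
def Supply (τ₁ τ₂ κ σ : ℝ) (q₀ : ℕ) : Prop :=
  ∀ ρ : ℚ, q₀ ≤ ρ.den → ∃ N₀ : ℕ, ∀ N ≥ N₀, ∃ R : Finset ℚ,
    κ * (ρ.den : ℝ) ^ (-σ) * (N : ℝ) ^ 2 ≤ R.card ∧
      ∀ ρ' ∈ R, κ * N ≤ ρ'.den ∧ ρ'.den ≤ N ∧ IsChild τ₁ τ₂ ρ ρ'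

/-- One step of the construction.  A single `N`, chosen large in terms of all nodes of `L`, serves
every node; then `⌈κ L.N^(-σ) N²⌉` successors are kept for each of them.  The growth invariant
persists because `N^(s σ)` is of smaller order than `N²`. -/
theorem exists_step (τ₁ τ₂ κ σ s C : ℝ) (q₀ : ℕ) (hτ₁ : 2 < τ₁) (hκ : 0 < κ) (hσ : 0 < σ)
    (hsσ : s * σ < 2) (hsup : Supply τ₁ τ₂ κ σ q₀) (L : Level)
    (hL : L.Good q₀ κ σ s C) : ∃ L' m, L'.Good q₀ κ σ s C ∧ L.Step τ₁ τ₂ κ σ L' m := by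
  have hLN : 0 < L.N := lt_of_lt_of_le (Rat.den_pos _) (hL.den_le 0 hL.pos)
  have hLN' : (0 : ℝ) < L.N := by exact_mod_cast hLN
  set a : ℝ := κ * (L.N : ℝ) ^ (-σ) with ha
  have ha0 : 0 < a := by positivity
  have hsup' : ∀ i, ∃ N₀ : ℕ, i < L.M → ∀ N ≥ N₀, ∃ R : Finset ℚ,
      κ * ((L.node i).den : ℝ) ^ (-σ) * (N : ℝ) ^ 2 ≤ R.card ∧
      ∀ ρ' ∈ R, κ * N ≤ ρ'.den ∧ ρ'.den ≤ N ∧ IsChild τ₁ τ₂ (L.node i) ρ' := by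
    intro i
    by_cases hi : i < L.M
    · obtain ⟨N₀, h⟩ := hsup (L.node i) (hL.le_den i hi)
      exact ⟨N₀, fun _ => h⟩
    · exact ⟨0, fun h => absurd h hi⟩
  choose N₀ hN₀ using hsup'
  have e1 : ∀ᶠ N : ℕ in atTop, (q₀ : ℝ) ≤ κ * N :=
    (tendsto_natCast_atTop_atTop.const_mul_atTop hκ).eventually_ge_atTop _
  have e2 : ∀ᶠ N : ℕ in atTop, 2 ≤ a * (N : ℝ) ^ 2 :=
    (((tendsto_pow_atTop two_ne_zero).comp tendsto_natCast_atTop_atTop).const_mul_atTop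
      ha0).eventually_ge_atTop _
  have e3 : ∀ᶠ N : ℕ in atTop, (κ * (N : ℝ)) ^ (-τ₁) ≤ 1 / (2 * (N : ℝ) ^ 2) := by
    have : ∀ᶠ N : ℕ in atTop, 2 * κ ^ (-τ₁) ≤ (N : ℝ) ^ (τ₁ - 2) :=
      ((tendsto_rpow_atTop (by linarith : 0 < τ₁ - 2)).comp
        tendsto_natCast_atTop_atTop).eventually_ge_atTop _
    filter_upwards [this, eventually_gt_atTop 0] with N hN hN0
    have hN0' : (0 : ℝ) < N := by exact_mod_cast hN0
    rw [Real.mul_rpow hκ.le hN0'.le, le_div_iff₀ (by positivity)]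
    have : (N : ℝ) ^ (-τ₁) * N ^ 2 * (N : ℝ) ^ (τ₁ - 2) = 1 := by
      rw [← Real.rpow_natCast, ← Real.rpow_add hN0', ← Real.rpow_add hN0']
      simp
    calc κ ^ (-τ₁) * (N : ℝ) ^ (-τ₁) * (2 * (N : ℝ) ^ 2)
        = (2 * κ ^ (-τ₁)) * ((N : ℝ) ^ (-τ₁) * N ^ 2) := by ring
      _ ≤ (N : ℝ) ^ (τ₁ - 2) * ((N : ℝ) ^ (-τ₁) * N ^ 2) := by gcongr
      _ = 1 := by rw [← this]; ring
  have e4 : ∀ᶠ N : ℕ in atTop, C * (4 / κ * (N : ℝ) ^ σ) ^ s ≤ a * (N : ℝ) ^ 2 := by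
    have : ∀ᶠ N : ℕ in atTop, C * (4 / κ) ^ s / a ≤ (N : ℝ) ^ (2 - s * σ) :=
      ((tendsto_rpow_atTop (by linarith : 0 < 2 - s * σ)).comp
        tendsto_natCast_atTop_atTop).eventually_ge_atTop _
    filter_upwards [this, eventually_gt_atTop 0] with N hN hN0
    have hN0' : (0 : ℝ) < N := by exact_mod_cast hN0
    rw [div_le_iff₀ ha0] at hN
    rw [Real.mul_rpow (by positivity) (by positivity), ← Real.rpow_mul hN0'.le]
    have : (N : ℝ) ^ (2 - s * σ) * (N : ℝ) ^ (σ * s) = N ^ 2 := by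
      rw [← Real.rpow_natCast, ← Real.rpow_add hN0']; congr 1; push_cast; ring
    calc C * ((4 / κ) ^ s * (N : ℝ) ^ (σ * s)) = C * (4 / κ) ^ s * (N : ℝ) ^ (σ * s) := by ring
      _ ≤ (N : ℝ) ^ (2 - s * σ) * a * (N : ℝ) ^ (σ * s) := by gcongr
      _ = a * (N : ℝ) ^ 2 := by rw [← this]; ring
  have e5 : ∀ᶠ N : ℕ in atTop, ∀ i ∈ Finset.range L.M, N₀ i ≤ N :=
    (Finset.eventually_all _).2 fun i _ => eventually_ge_atTop _
  obtain ⟨N, h1, h2, h3, h4, h5, h6⟩ :=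
    (e1.and (e2.and (e3.and (e4.and (e5.and (eventually_gt_atTop 0)))))).exists
  have hN0 : (0 : ℝ) < N := by exact_mod_cast h6
  set m : ℕ := ⌈a * (N : ℝ) ^ 2⌉₊ with hm
  have hm1 : a * (N : ℝ) ^ 2 ≤ m := Nat.le_ceil _
  have hm2 : 2 ≤ m := by exact_mod_cast h2.trans hm1
  have hseq : ∀ i, ∃ e : ℕ → ℚ, i < L.M → (∀ j < m, κ * N ≤ (e j).den ∧ (e j).den ≤ N ∧
      IsChild τ₁ τ₂ (L.node i) (e j)) ∧ ∀ j j', j < j' → j' < m → e j < e j' := by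
    intro i
    by_cases hi : i < L.M
    · obtain ⟨R, hR1, hR2⟩ := hN₀ i hi N (h5 i (Finset.mem_range.2 hi))
      have hcard : m ≤ R.card := by
        refine Nat.ceil_le.2 (le_trans ?_ hR1)
        have : (L.N : ℝ) ^ (-σ) ≤ ((L.node i).den : ℝ) ^ (-σ) :=
          Real.rpow_le_rpow_of_nonpos (by exact_mod_cast Rat.den_pos _)
            (by exact_mod_cast hL.den_le i hi) (by linarith)
        rw [ha]; gcongr
      let f := R.orderEmbOfCardLe hcard
      refine ⟨fun j => if h : j < m then f ⟨j, h⟩ else 0, fun _ => ⟨?_, ?_⟩⟩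
      · intro j hj
        simp only [hj, dif_pos]
        exact hR2 _ (Finset.orderEmbOfCardLe_mem R hcard _)
      · intro j j' hjj hj'
        simp only [hj', hjj.trans hj', dif_pos]
        exact f.strictMono hjj
    · exact ⟨fun _ => 0, fun h => absurd h hi⟩
  choose e he using hseq
  have hmpos : 0 < m := by omega
  have hidx : ∀ i, i < L.M * m → i / m < L.M := fun i hi =>
    (Nat.div_lt_iff_lt_mul hmpos).2 hi
  have hnode : ∀ i, i < L.M * m → κ * N ≤ (e (i / m) (i % m)).den ∧
      (e (i / m) (i % m)).den ≤ N ∧ IsChild τ₁ τ₂ (L.node (i / m)) (e (i / m) (i % m)) :=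
    fun i hi => (he (i / m) (hidx i hi)).1 _ (Nat.mod_lt _ hmpos)
  refine ⟨⟨L.M * m, N, fun i => e (i / m) (i % m)⟩, m, ⟨?_, ?_, ?_, ?_⟩,
    ⟨hm2, rfl, h6, ?_, hm1, ?_, ?_⟩⟩
  · exact Nat.mul_pos hL.pos hmpos
  · intro i hi
    exact_mod_cast h1.trans (hnode i hi).1
  · exact fun i hi => (hnode i hi).2.1
  · refine (h4.trans hm1).trans ?_
    push_cast
    have : (1 : ℝ) ≤ L.M := by exact_mod_cast hL.pos
    nlinarith [(Nat.cast_nonneg m : (0 : ℝ) ≤ m)]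
  · exact fun i hi => (hnode i hi).2.2
  · intro i j hij hj hdiv
    simp only at hj ⊢
    have hj' := he (j / m) (hidx j hj)
    have hi2 := Nat.div_add_mod i m
    have hj2 := Nat.div_add_mod j m
    rw [hdiv] at hi2 ⊢
    have := rat_sep_seq (e (j / m)) m N (fun l hl => (hj'.1 l hl).2.1) hj'.2 (i % m) (j % m)
      (by omega) (Nat.mod_lt _ hmpos)
    have h7 : (j : ℝ) - i = ((j % m : ℕ) : ℝ) - ((i % m : ℕ) : ℝ) := by
      have a1 : (i : ℝ) = (m * (j / m) : ℕ) + (i % m : ℕ) := by exact_mod_cast hi2.symm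
      have a2 : (j : ℝ) = (m * (j / m) : ℕ) + (j % m : ℕ) := by exact_mod_cast hj2.symm
      linarith
    rw [h7]; exact this
  · intro i hi
    refine le_trans ?_ h3
    exact Real.rpow_le_rpow_of_nonpos (by positivity) (hnode i hi).1 (by linarith)

/-! ### The Hölder map onto the unit interval -/

/-- The Hölder estimate for two points whose paths separate after a generation of `M` nodes with
denominators at most `N`; `D` is the difference of their indices in the next generation. -/
theorem holder_arith {κ σ s B N N' M m D δ u : ℝ} (hκ : 0 < κ) (hB0 : 0 < B) (hN : 0 < N)
    (hN' : 0 < N') (hM : 0 < M) (hs : 0 ≤ s) (hs1 : s ≤ 1) (hu : 0 < u) (hδ0 : 0 < δ)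
    (hgrow : B⁻¹ * (4 / κ * N ^ σ) ^ s ≤ M) (hmany : κ * N ^ (-σ) * N' ^ 2 ≤ m)
    (hgap : D / (2 * N' ^ 2) ≤ δ) (hu1 : u * M ≤ 1) (g1 : u * (M * m) ≤ 2 * D) :
    u ≤ B * δ ^ s := by
  have hA : 0 < 4 / κ * N ^ σ := by positivity
  have hu0 : 0 < u * M := mul_pos hu hM
  have hu2 : u * M ≤ 4 / κ * N ^ σ * δ := by
    have g2 : u * M * (κ * N ^ (-σ) * N' ^ 2) ≤ 2 * D := by
      linarith [mul_le_mul_of_nonneg_left hmany hu0.le]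
    rw [div_le_iff₀ (by positivity)] at hgap
    have g3 : N ^ (-σ) * N ^ σ = 1 := by rw [← Real.rpow_add hN]; simp
    have g4 : u * M * κ * N ^ (-σ) ≤ 4 * δ := by
      have : u * M * κ * N ^ (-σ) * N' ^ 2 ≤ 4 * δ * N' ^ 2 := by linarith
      exact le_of_mul_le_mul_right this (by positivity)
    rw [div_mul_eq_mul_div, div_mul_eq_mul_div, le_div_iff₀ hκ]
    calc u * M * κ = u * M * κ * (N ^ (-σ) * N ^ σ) := by rw [g3, mul_one]
      _ = u * M * κ * N ^ (-σ) * N ^ σ := by ring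
      _ ≤ 4 * δ * N ^ σ := by gcongr
      _ = 4 * N ^ σ * δ := by ring
  -- `u M ≤ 1` gives `u M ≤ (u M) ^ s`
  have hu3 : u * M ≤ (4 / κ * N ^ σ * δ) ^ s := by
    calc u * M ≤ (u * M) ^ s := Real.self_le_rpow_of_le_one hu0.le hu1 hs1
      _ ≤ _ := Real.rpow_le_rpow hu0.le hu2 hs
  rw [Real.mul_rpow hA.le hδ0.le] at hu3
  have hBC : B * B⁻¹ = 1 := mul_inv_cancel₀ hB0.ne'
  have : u * M ≤ B * δ ^ s * M := by
    calc u * M ≤ (4 / κ * N ^ σ) ^ s * δ ^ s := hu3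
      _ = B * (B⁻¹ * (4 / κ * N ^ σ) ^ s) * δ ^ s := by rw [← mul_assoc, hBC, one_mul]
      _ ≤ B * M * δ ^ s := by gcongr
      _ = _ := by ring
  exact le_of_mul_le_mul_right this hM

/-- If every node has a supply of successors, then `[0, 1)` is the image of a subset of `ESet` under
an `s`-Hölder map, namely the one reading off the path of a point through the tree as the
mixed-radix digits of a real number. -/
theorem le_dimH_of_supply (τ₁ τ₂ κ σ : ℝ) (s : NNReal) (q₀ : ℕ) (hτ₁ : 2 < τ₁) (hτ₂ : 0 < τ₂)
    (hκ : 0 < κ) (hσ : 0 < σ) (hs : 0 < s) (hs1 : s ≤ 1) (hsσ : s * σ < 2)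
    (hsup : Supply τ₁ τ₂ κ σ q₀) :
    (s : ENNReal) ≤ dimH (ESet (fun q : ℝ => q ^ (-τ₁)) (fun q : ℝ => q ^ (-τ₂))) := by
  have hs' : (0 : ℝ) < s := by exact_mod_cast hs
  have hs1' : (s : ℝ) ≤ 1 := by exact_mod_cast hs1
  set B : ℝ := (4 / κ * ((q₀ + 1 : ℕ) : ℝ) ^ σ) ^ (s : ℝ) with hB
  have hB0 : 0 < B := by positivity
  set C : ℝ := B⁻¹ with hC
  have hC0 : 0 < C := by positivity
  let L₀ : Level := ⟨1, q₀ + 1, fun _ => ((q₀ + 1 : ℕ) : ℚ)⁻¹⟩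
  have hden : (((q₀ + 1 : ℕ) : ℚ)⁻¹).den = q₀ + 1 := Rat.inv_natCast_den_of_pos (by omega)
  have hL₀ : L₀.Good q₀ κ σ s C := by
    refine ⟨one_pos, fun i _ => ?_, fun i _ => ?_, ?_⟩
    · simp only [L₀]; omega
    · simp only [L₀]; omega
    · simp only [L₀, ← hB, hC]
      rw [inv_mul_cancel₀ hB0.ne']; simp
  obtain ⟨L, m, hM0, hG, hS⟩ : ∃ (L : ℕ → Level) (m : ℕ → ℕ), (L 0).M = 1 ∧
      (∀ k, (L k).Good q₀ κ σ s C) ∧ ∀ k, (L k).Step τ₁ τ₂ κ σ (L (k + 1)) (m k) := by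
    choose next mm hgood hstep using fun L : {L : Level // L.Good q₀ κ σ s C} =>
      exists_step τ₁ τ₂ κ σ s C q₀ hτ₁ hκ hσ hsσ hsup L.1 L.2
    let seq : ℕ → {L : Level // L.Good q₀ κ σ s C} := fun k =>
      Nat.rec ⟨L₀, hL₀⟩ (fun _ L => ⟨next L, hgood L⟩) k
    exact ⟨fun k => (seq k).1, fun k => mm (seq k), rfl, fun k => (seq k).2,
      fun k => hstep (seq k)⟩
  have hMpos : ∀ k, (0 : ℝ) < (L k).M := fun k => by exact_mod_cast (hG k).pos
  have hM2 : ∀ k, 2 ^ k ≤ (L k).M := by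
    intro k
    induction k with
    | zero => simp [hM0]
    | succ k ih =>
      rw [(hS k).M_eq, pow_succ]
      exact Nat.mul_le_mul ih (hS k).two_le
  let idx : ℝ → ℕ → ℕ := fun t k => ⌊t * (L k).M⌋₊
  have hidx_lt : ∀ t ∈ Ico (0 : ℝ) 1, ∀ k, idx t k < (L k).M := by
    intro t ht k
    refine (Nat.floor_lt (mul_nonneg ht.1 (hMpos k).le)).2 ?_
    nlinarith [ht.2, hMpos k]
  have hidx_div : ∀ t k, idx t (k + 1) / m k = idx t k := by
    intro t k
    have hm : (m k : ℝ) ≠ 0 := by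
      have := (hS k).two_le
      exact_mod_cast (by omega : m k ≠ 0)
    simp only [idx]
    rw [← Nat.floor_div_natCast, (hS k).M_eq]
    push_cast
    rw [← mul_assoc, mul_div_cancel_right₀ _ hm]
  have hchild : ∀ t ∈ Ico (0 : ℝ) 1, ∀ k,
      IsChild τ₁ τ₂ ((L k).node (idx t k)) ((L (k + 1)).node (idx t (k + 1))) := by
    intro t ht k
    have := (hS k).child _ (hidx_lt t ht (k + 1))
    rwa [hidx_div] at this
  have hpt : ∀ t, ∃ x : ℝ, t ∈ Ico (0 : ℝ) 1 → ∀ k, x ∈ cell τ₁ τ₂ ((L k).node (idx t k)) := by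
    intro t
    by_cases ht : t ∈ Ico (0 : ℝ) 1
    · obtain ⟨x, hx⟩ := IsCompact.nonempty_iInter_of_sequence_nonempty_isCompact_isClosed
        (fun k => cell τ₁ τ₂ ((L k).node (idx t k))) (fun k => (hchild t ht k).2.1)
        (fun k => cell_nonempty _ _ _) isCompact_Icc (fun k => isClosed_Icc)
      exact ⟨x, fun _ => mem_iInter.1 hx⟩
    · exact ⟨0, fun h => absurd h ht⟩
  choose g hg using hpt
  have hone : ∀ ρ : ℚ, (ρ.den : ℝ) ^ (-τ₂) ≤ 1 := fun ρ =>
    Real.rpow_le_one_of_one_le_of_nonpos (by exact_mod_cast ρ.den_pos) (by linarith)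
  have hgE : g '' Ico (0 : ℝ) 1 ⊆ ESet (fun q : ℝ => q ^ (-τ₁)) (fun q : ℝ => q ^ (-τ₂)) := by
    rintro _ ⟨t, ht, rfl⟩
    exact mem_ESet_of_chain τ₁ τ₂ _ (hchild t ht) (fun k => hone _) _ (hg t ht)
  have hcell : ∀ (ρ : ℚ) (x : ℝ), x ∈ cell τ₁ τ₂ ρ → (ρ : ℝ) ≤ x ∧ x ≤ ρ + (ρ.den : ℝ) ^ (-τ₁) := by
    intro ρ x hx
    refine ⟨le_trans ?_ hx.1, hx.2⟩
    have : 0 ≤ (1 - (ρ.den : ℝ) ^ (-τ₂)) * (ρ.den : ℝ) ^ (-τ₁) :=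
      mul_nonneg (by linarith [hone ρ]) (by positivity)
    linarith
  have hfl : ∀ t ∈ Ico (0 : ℝ) 1, ∀ k, (idx t k : ℝ) ≤ t * (L k).M ∧ t * (L k).M < idx t k + 1 :=
    fun t ht k => ⟨Nat.floor_le (mul_nonneg ht.1 (hMpos k).le), Nat.lt_floor_add_one _⟩
  have hmain : ∀ t ∈ Ico (0 : ℝ) 1, ∀ t' ∈ Ico (0 : ℝ) 1, t < t' →
      t' - t ≤ B * |g t' - g t| ^ (s : ℝ) := by
    intro t ht t' ht' htt
    have hex : ∃ k, idx t k ≠ idx t' k := by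
      obtain ⟨k, hk⟩ := pow_unbounded_of_one_lt (1 / (t' - t)) (one_lt_two (α := ℝ))
      refine ⟨k, fun heq => ?_⟩
      have h1 := hfl t ht k
      have h2 := hfl t' ht' k
      rw [heq] at h1
      have h3 : (2 : ℝ) ^ k ≤ (L k).M := by exact_mod_cast hM2 k
      rw [div_lt_iff₀ (by linarith)] at hk
      nlinarith
    classical
    obtain ⟨k, hk⟩ : ∃ k, Nat.find hex = k + 1 :=
      Nat.exists_eq_succ_of_ne_zero fun h0 => by
        have h1 := Nat.find_spec hex
        rw [h0] at h1
        have h2 := hidx_lt t ht 0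
        have h3 := hidx_lt t' ht' 0
        rw [hM0] at h2 h3
        omega
    have hk1 : idx t (k + 1) ≠ idx t' (k + 1) := hk ▸ Nat.find_spec hex
    have hk2 : idx t k = idx t' k := not_not.1 (Nat.find_min hex (m := k) (by omega))
    have hlt : idx t (k + 1) < idx t' (k + 1) := by
      refine lt_of_le_of_ne (Nat.floor_mono ?_) hk1
      exact mul_le_mul_of_nonneg_right htt.le (hMpos (k + 1)).le
    have hsep := (hS k).sep _ _ hlt (hidx_lt t' ht' _) (by rw [hidx_div, hidx_div, hk2])
    have hsm := (hS k).small _ (hidx_lt t ht (k + 1))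
    have hx := hcell _ _ (hg t ht (k + 1))
    have hx' := hcell _ _ (hg t' ht' (k + 1))
    have f1 := hfl t ht (k + 1)
    have f2 := hfl t' ht' (k + 1)
    have f3 := hfl t ht k
    have f4 := hfl t' ht' k
    rw [hk2] at f3
    have hmany := (hS k).many
    have hN' : (0 : ℝ) < (L (k + 1)).N := by exact_mod_cast (hS k).N_pos
    have hN : (0 : ℝ) < (L k).N := by
      exact_mod_cast lt_of_lt_of_le (Rat.den_pos _) ((hG k).den_le 0 (hG k).pos)
    have hMeq : ((L (k + 1)).M : ℝ) = (L k).M * m k := by exact_mod_cast (hS k).M_eq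
    have hgrow := (hG k).growth
    set D : ℝ := (idx t' (k + 1) : ℝ) - idx t (k + 1) with hD
    have hD1 : 1 ≤ D := by
      have : (idx t (k + 1) : ℝ) + 1 ≤ idx t' (k + 1) := by exact_mod_cast hlt
      linarith
    set N' : ℝ := ((L (k + 1)).N : ℝ) with hN'def
    set N : ℝ := ((L k).N : ℝ) with hNdef
    set M : ℝ := ((L k).M : ℝ) with hMdef
    have hM : 0 < M := hMpos k
    -- the limit points inherit the separation of the siblings
    have hgap : D / (2 * N' ^ 2) ≤ g t' - g t := by
      have e1 : D / N' ^ 2 = D / (2 * N' ^ 2) + D / (2 * N' ^ 2) := by field_simp; ring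
      have e2 : 1 / (2 * N' ^ 2) ≤ D / (2 * N' ^ 2) := by gcongr
      linarith [hx.2, hx'.1]
    set δ : ℝ := g t' - g t with hδ
    have hδ0 : 0 < δ := lt_of_lt_of_le (by positivity) hgap
    rw [abs_of_pos hδ0]
    exact holder_arith hκ hB0 hN hN' hM hs'.le hs1' (by linarith) hδ0 hgrow hmany hgap
      (by linarith [f3.1, f4.2]) (by rw [← hMeq]; linarith [f1.1, f2.2])
  have hmain' : ∀ t ∈ Ico (0 : ℝ) 1, ∀ t' ∈ Ico (0 : ℝ) 1,
      dist t t' ≤ B * dist (g t) (g t') ^ (s : ℝ) := by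
    intro t ht t' ht'
    rcases lt_trichotomy t t' with h | h | h
    · rw [dist_comm, dist_comm (g t), Real.dist_eq, Real.dist_eq, abs_of_pos (by linarith)]
      exact hmain t ht t' ht' h
    · rw [h, dist_self, dist_self]; positivity
    · rw [Real.dist_eq, Real.dist_eq, abs_of_pos (by linarith)]
      exact hmain t' ht' t ht h
  have hinj : InjOn g (Ico (0 : ℝ) 1) := by
    intro t ht t' ht' h
    have := hmain' t ht t' ht'
    rw [h, dist_self, Real.zero_rpow hs'.ne', mul_zero] at this
    exact dist_le_zero.1 this
  let f := Function.invFunOn g (Ico (0 : ℝ) 1)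
  have hfg : ∀ t ∈ Ico (0 : ℝ) 1, f (g t) = t := fun t ht => hinj.leftInvOn_invFunOn ht
  have hhol : HolderOnWith B.toNNReal s f (g '' Ico (0 : ℝ) 1) := by
    rintro _ ⟨t, ht, rfl⟩ _ ⟨t', ht', rfl⟩
    rw [hfg t ht, hfg t' ht', edist_dist, edist_dist,
      ENNReal.ofReal_rpow_of_nonneg dist_nonneg hs'.le]
    change _ ≤ ENNReal.ofReal B * _
    rw [← ENNReal.ofReal_mul hB0.le]
    exact ENNReal.ofReal_le_ofReal (hmain' t ht t' ht')
  have himg : f '' (g '' Ico (0 : ℝ) 1) = Ico 0 1 := by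
    rw [image_image]
    ext t
    constructor
    · rintro ⟨u, hu, rfl⟩; simpa only [hfg u hu] using hu
    · exact fun ht => ⟨t, ht, hfg t ht⟩
  have hdim := hhol.dimH_image_le hs
  have h1 : dimH (Ico (0 : ℝ) 1) = 1 := by
    have := Real.dimH_of_mem_nhds (E := ℝ) (Ico_mem_nhds (by norm_num : (0 : ℝ) < 1 / 2)
      (by norm_num : (1 / 2 : ℝ) < 1))
    simpa using this
  rw [himg, h1] at hdim
  have hs0 : (s : ENNReal) ≠ 0 := by exact_mod_cast hs.ne'
  rw [ENNReal.le_div_iff_mul_le (Or.inl hs0) (Or.inl ENNReal.coe_ne_top), one_mul] at hdim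
  exact hdim.trans (dimH_mono hgE)

/-! ### The supply of successors -/

section Supply

open MeasureTheory

/-- A `δ`-separated subset of `[a, b]` has at most `1 + (b - a)/δ` points; this bounds the measure
of its `r`-neighbourhood. -/
theorem separated_cover {F : Set ℝ} {a b δ r : ℝ} (hδ : 0 < δ) (hab : a ≤ b) (hr : 0 ≤ r)
    (hF : F ⊆ Icc a b) (hsep : ∀ x ∈ F, ∀ y ∈ F, x < y → δ ≤ y - x) :
    volume (⋃ x ∈ F, Metric.closedBall x r) ≤ ENNReal.ofReal ((1 + (b - a) / δ) * (2 * r)) := by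
  have hba : 0 ≤ (b - a) / δ := div_nonneg (by linarith) hδ.le
  -- the slots of length `δ` contain at most one point each
  have hmaps : MapsTo (fun x => ⌊(x - a) / δ⌋₊) F (Finset.range (⌊(b - a) / δ⌋₊ + 1)) := by
    intro x hx
    simp only [Finset.coe_range, mem_Iio, Nat.lt_succ_iff]
    have := (hF hx).2
    exact Nat.floor_mono (by gcongr)
  have hlt : ∀ x ∈ F, ∀ y ∈ F, x < y → ⌊(x - a) / δ⌋₊ ≠ ⌊(y - a) / δ⌋₊ := by
    intro x hx y hy hxy heq
    have h1 : (x - a) / δ + 1 ≤ (y - a) / δ := by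
      rw [← sub_nonneg]
      have : (y - a) / δ - ((x - a) / δ + 1) = ((y - x) - δ) / δ := by field_simp; ring
      rw [this]
      exact div_nonneg (by linarith [hsep x hx y hy hxy]) hδ.le
    have hx0 : 0 ≤ (x - a) / δ := div_nonneg (by linarith [(hF hx).1]) hδ.le
    have h2 := Nat.floor_mono h1
    rw [Nat.floor_add_one hx0] at h2
    omega
  have hinj : InjOn (fun x => ⌊(x - a) / δ⌋₊) F := by
    intro x hx y hy hxy
    rcases lt_trichotomy x y with h | h | h
    · exact absurd hxy (hlt x hx y hy h)
    · exact h
    · exact absurd hxy.symm (hlt y hy x hx h)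
  have hfin : F.Finite := Set.Finite.of_injOn hmaps hinj (Finset.finite_toSet _)
  have hcard : hfin.toFinset.card ≤ ⌊(b - a) / δ⌋₊ + 1 := by
    have := Finset.card_le_card_of_injOn (s := hfin.toFinset)
      (t := Finset.range (⌊(b - a) / δ⌋₊ + 1)) (fun x => ⌊(x - a) / δ⌋₊)
      (fun x hx => hmaps (by simpa using hx)) (by simpa using hinj)
    simpa using this
  have hcard' : (hfin.toFinset.card : ℝ) ≤ 1 + (b - a) / δ := by
    have h1 : (hfin.toFinset.card : ℝ) ≤ ⌊(b - a) / δ⌋₊ + 1 := by exact_mod_cast hcard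
    linarith [Nat.floor_le hba]
  calc volume (⋃ x ∈ F, Metric.closedBall x r)
      = volume (⋃ x ∈ hfin.toFinset, Metric.closedBall x r) := by simp
    _ ≤ ∑ x ∈ hfin.toFinset, volume (Metric.closedBall x r) := measure_biUnion_finset_le _ _
    _ = ENNReal.ofReal (hfin.toFinset.card * (2 * r)) := by
      simp only [Real.volume_closedBall, Finset.sum_const, nsmul_eq_mul]
      rw [ENNReal.ofReal_mul (p := (hfin.toFinset.card : ℝ)) (by positivity), ENNReal.ofReal_natCast]
    _ ≤ _ := ENNReal.ofReal_le_ofReal (by gcongr)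

theorem frac_sep (r r' : ℤ) (s s' : ℕ) (hs : 0 < s) (hs' : 0 < s')
    (h : (r : ℝ) / s ≠ (r' : ℝ) / s') : 1 / ((s : ℝ) * s') ≤ |(r : ℝ) / s - (r' : ℝ) / s'| := by
  have hs0 : (0 : ℝ) < s := by exact_mod_cast hs
  have hs0' : (0 : ℝ) < s' := by exact_mod_cast hs'
  have e : (r : ℝ) / s - (r' : ℝ) / s' = ((r * s' - r' * s : ℤ) : ℝ) / (s * s') := by
    push_cast; field_simp
  have hne : r * s' - r' * s ≠ 0 := by
    intro h0
    apply h
    rw [← sub_eq_zero, e, h0]; simp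
  have h1 : (1 : ℝ) ≤ |((r * s' - r' * s : ℤ) : ℝ)| := by
    exact_mod_cast Int.one_le_abs hne
  rw [e, abs_div, abs_of_pos (mul_pos hs0 hs0')]
  gcongr

theorem frac_sep' (ρ : ℚ) (r : ℤ) (s : ℕ) (hs : 0 < s) (h : (r : ℝ) / s ≠ ρ) :
    1 / ((ρ.den : ℝ) * s) ≤ |(ρ : ℝ) - (r : ℝ) / s| := by
  have e := Rat.cast_def (K := ℝ) ρ
  rw [e] at h ⊢
  exact frac_sep _ _ _ _ ρ.den_pos hs h.symm

theorem den_dvd_of_eq (ρ : ℚ) (r : ℤ) (s : ℕ) (h : (r : ℝ) / s = ρ) :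
    ρ.den ∣ s := by
  have h' : ρ = (r : ℚ) / ((s : ℤ) : ℚ) := by
    have : ((r : ℚ) / (s : ℚ) : ℚ) = ρ := by exact_mod_cast h
    rw [← this]; push_cast; rfl
  have := Rat.den_dvd r (s : ℤ)
  rw [← Rat.intCast_div_eq_divInt, ← h'] at this
  exact_mod_cast this

theorem eventually_rpow_le (c : ℝ) {a b : ℝ} (hab : a < b) :
    ∀ᶠ N : ℕ in atTop, c * (N : ℝ) ^ a ≤ (N : ℝ) ^ b := by
  have h : ∀ᶠ N : ℕ in atTop, c ≤ (N : ℝ) ^ (b - a) :=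
    ((tendsto_rpow_atTop (by linarith : 0 < b - a)).comp
      tendsto_natCast_atTop_atTop).eventually_ge_atTop _
  filter_upwards [h, eventually_gt_atTop 0] with N hN hN0
  have hN0' : (0 : ℝ) < N := by exact_mod_cast hN0
  calc c * (N : ℝ) ^ a ≤ (N : ℝ) ^ (b - a) * (N : ℝ) ^ a := by gcongr
    _ = (N : ℝ) ^ b := by rw [← Real.rpow_add hN0']; congr 1; ring

/-- The points that some fraction with denominator `> q` approximates within `2 s^(-τ₁)`. -/
def badSet (τ₁ : ℝ) (q : ℕ) : Set ℝ :=
  {y | ∃ s : ℕ, q < s ∧ ∃ r : ℤ, |y - (r : ℝ) / s| < 2 * (s : ℝ) ^ (-τ₁)}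

/-- No fraction with denominator in `(q, q^(τ₁-1)/2]` comes dangerously close to the cell of a
rational with denominator `q`. -/
theorem not_bad_of_le {τ₁ τ₂ : ℝ} (hτ₁ : 2 < τ₁) (ρ : ℚ)
    (h1 : (ρ.den : ℝ) ^ (-τ₂) ≤ 1 / 2) (h2 : 4 ≤ (ρ.den : ℝ) ^ (τ₁ - 2))
    {y : ℝ} (hy : y ∈ cell τ₁ τ₂ ρ) {s : ℕ} (hs : ρ.den < s)
    (hsT : (s : ℝ) ≤ (ρ.den : ℝ) ^ (τ₁ - 1) / 2) (r : ℤ) :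
    2 * (s : ℝ) ^ (-τ₁) ≤ |y - (r : ℝ) / s| := by
  have hq : (0 : ℝ) < ρ.den := by exact_mod_cast ρ.den_pos
  have hs0 : 0 < s := by omega
  have hs0' : (0 : ℝ) < s := by exact_mod_cast hs0
  have hqs : (ρ.den : ℝ) < s := by exact_mod_cast hs
  have hΨ : 0 < (ρ.den : ℝ) ^ (-τ₁) := by positivity
  have hy1 := hy.1
  have hy2 := hy.2
  have hy3 : (ρ.den : ℝ) ^ (-τ₁) / 2 ≤ y - ρ := by nlinarith
  by_cases hr : (r : ℝ) / s = ρ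
  · have hdvd := den_dvd_of_eq ρ r s hr
    have h2q : 2 * ρ.den ≤ s := by
      obtain ⟨c, rfl⟩ := hdvd
      have : 2 ≤ c := by
        by_contra hc
        have : c ≤ 1 := by omega
        nlinarith [ρ.den_pos]
      nlinarith [ρ.den_pos]
    have h2q' : 2 * (ρ.den : ℝ) ≤ s := by exact_mod_cast h2q
    have h3 : (s : ℝ) ^ (-τ₁) ≤ (2 * (ρ.den : ℝ)) ^ (-τ₁) :=
      Real.rpow_le_rpow_of_nonpos (by positivity) h2q' (by linarith)
    have h4 : (2 : ℝ) ^ (-τ₁) ≤ 1 / 4 := by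
      calc (2 : ℝ) ^ (-τ₁) ≤ (2 : ℝ) ^ (-2 : ℝ) :=
            Real.rpow_le_rpow_of_exponent_le (by norm_num) (by linarith)
        _ = 1 / 4 := by rw [Real.rpow_neg (by norm_num)]; norm_num
    rw [Real.mul_rpow (by norm_num) hq.le] at h3
    rw [hr]
    have := le_abs_self (y - ρ)
    nlinarith
  · have h3 := frac_sep' ρ r s hs0 hr
    -- `Ψ q = 1 / (q * q^(τ₁-1)) ≤ 1 / (2 q s)`
    have h4 : (ρ.den : ℝ) ^ (-τ₁) ≤ 1 / (2 * ((ρ.den : ℝ) * s)) := by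
      have e : (ρ.den : ℝ) ^ (-τ₁) * ((ρ.den : ℝ) * (ρ.den : ℝ) ^ (τ₁ - 1)) = 1 := by
        rw [← Real.rpow_one_add' hq.le (by linarith), ← Real.rpow_add hq]; simp
      rw [le_div_iff₀ (by positivity)]
      calc (ρ.den : ℝ) ^ (-τ₁) * (2 * ((ρ.den : ℝ) * s))
          ≤ (ρ.den : ℝ) ^ (-τ₁) * (2 * ((ρ.den : ℝ) * ((ρ.den : ℝ) ^ (τ₁ - 1) / 2))) := by gcongr
        _ = 1 := by linear_combination e
    have h5 : 2 * (s : ℝ) ^ (-τ₁) ≤ 1 / (2 * ((ρ.den : ℝ) * s)) := by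
      have e : (s : ℝ) ^ (-τ₁) * (s * s * (s : ℝ) ^ (τ₁ - 2)) = 1 := by
        rw [← sq, ← Real.rpow_natCast, ← Real.rpow_add hs0', ← Real.rpow_add hs0']; simp
      have h6 : (4 : ℝ) ≤ (s : ℝ) ^ (τ₁ - 2) :=
        h2.trans (Real.rpow_le_rpow hq.le hqs.le (by linarith))
      rw [le_div_iff₀ (by positivity)]
      calc 2 * (s : ℝ) ^ (-τ₁) * (2 * ((ρ.den : ℝ) * s))
          = (s : ℝ) ^ (-τ₁) * ((ρ.den : ℝ) * s * 4) := by ring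
        _ ≤ (s : ℝ) ^ (-τ₁) * (s * s * (s : ℝ) ^ (τ₁ - 2)) := by gcongr
        _ = 1 := e
    have h6 : 1 / ((ρ.den : ℝ) * s) = 1 / (2 * ((ρ.den : ℝ) * s)) + 1 / (2 * ((ρ.den : ℝ) * s)) := by
      field_simp; norm_num
    have h7 : |(ρ : ℝ) - (r : ℝ) / s| ≤ |y - (r : ℝ) / s| + |y - ρ| := by
      have := abs_sub_le (ρ : ℝ) y ((r : ℝ) / s)
      rw [abs_sub_comm (ρ : ℝ) y] at this; linarith
    have h8 : |y - ρ| ≤ (ρ.den : ℝ) ^ (-τ₁) := by rw [abs_le]; constructor <;> linarith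
    linarith

/-- The dyadic union bound: fractions with denominators `≥ T` spoil only a small part of an
interval of length `ℓ`, as soon as `T^(-τ₁)` is small compared with `ℓ`. -/
theorem dyadic_bad {τ₁ a b ℓ T η : ℝ} (hτ₁ : 2 < τ₁) (hℓ : 0 < ℓ) (hab : b - a = ℓ) (hT : 0 < T)
    (hη : η = (1 - 2 ^ (-(τ₁ - 2))) / 416)
    (hT1 : T ^ (-τ₁) ≤ η * ℓ) (hT2 : T ^ (2 - τ₁) ≤ η) :
    volume {y ∈ Icc a b | ∃ s : ℕ, T ≤ s ∧ ∃ r : ℤ, |y - (r : ℝ) / s| ≤ 2 * (s : ℝ) ^ (-τ₁)} ≤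
      ENNReal.ofReal (ℓ / 8) := by
  set β : ℝ := 2 ^ (-(τ₁ - 2)) with hβ
  have hβ0 : 0 < β := by positivity
  have hβ1 : β < 1 := Real.rpow_lt_one_of_one_lt_of_neg (by norm_num) (by linarith)
  have hη0 : 0 < η := by rw [hη]; apply div_pos <;> linarith
  have hη1 : η ≤ 1 / 2 := by rw [hη]; linarith
  let F : ℕ → Set ℝ := fun j => {x | x ∈ Icc (a - ℓ) (b + ℓ) ∧ ∃ (s : ℕ) (r : ℤ),
    2 ^ j * T ≤ s ∧ (s : ℝ) ≤ 2 ^ (j + 1) * T ∧ x = (r : ℝ) / s}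
  let ε : ℕ → ℝ := fun j => 2 * ((2 : ℝ) ^ j * T) ^ (-τ₁)
  have hsub : {y ∈ Icc a b | ∃ s : ℕ, T ≤ s ∧ ∃ r : ℤ, |y - (r : ℝ) / s| ≤ 2 * (s : ℝ) ^ (-τ₁)} ⊆
      ⋃ j, ⋃ x ∈ F j, Metric.closedBall x (ε j) := by
    rintro y ⟨hy, s, hs, r, hr⟩
    obtain ⟨j, hj1, hj2⟩ := exists_nat_pow_near (x := (s : ℝ) / T) (y := 2)
      ((one_le_div hT).2 hs) one_lt_two
    rw [le_div_iff₀ hT] at hj1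
    rw [div_lt_iff₀ hT] at hj2
    have h1 : (s : ℝ) ^ (-τ₁) ≤ T ^ (-τ₁) :=
      Real.rpow_le_rpow_of_nonpos hT hs (by linarith)
    have h2 : 2 * (s : ℝ) ^ (-τ₁) ≤ ℓ := by nlinarith
    have h3 := abs_le.1 (hr.trans h2)
    simp only [mem_iUnion]
    refine ⟨j, (r : ℝ) / s, ⟨⟨by linarith [hy.1], by linarith [hy.2]⟩, s, r, hj1, hj2.le, rfl⟩, ?_⟩
    rw [Metric.mem_closedBall, Real.dist_eq]
    refine hr.trans ?_
    simp only [ε]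
    have := Real.rpow_le_rpow_of_nonpos (by positivity : (0 : ℝ) < 2 ^ j * T) hj1
      (by linarith : -τ₁ ≤ 0)
    linarith
  have hblock : ∀ j, volume (⋃ x ∈ F j, Metric.closedBall x (ε j)) ≤
      ENNReal.ofReal (52 * η * ℓ * β ^ j) := by
    intro j
    have hP : (0 : ℝ) < 2 ^ j := by positivity
    refine (separated_cover (δ := 1 / ((2 : ℝ) ^ (j + 1) * T) ^ 2) (a := a - ℓ) (b := b + ℓ)
      (by positivity) (by linarith) (by positivity) (fun x hx => hx.1) ?_).trans ?_
    · rintro x ⟨_, s, r, hs1, hs2, rfl⟩ y ⟨_, s', r', hs1', hs2', rfl⟩ hxy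
      have hs0 : (0 : ℝ) < s := lt_of_lt_of_le (by positivity) hs1
      have hs0' : (0 : ℝ) < s' := lt_of_lt_of_le (by positivity) hs1'
      have := frac_sep r' r s' s (by exact_mod_cast hs0') (by exact_mod_cast hs0) hxy.ne'
      rw [abs_of_pos (by linarith)] at this
      refine le_trans ?_ this
      rw [sq]
      gcongr
    · apply ENNReal.ofReal_le_ofReal
      have e1 : (b + ℓ - (a - ℓ)) / (1 / ((2 : ℝ) ^ (j + 1) * T) ^ 2) =
          12 * ℓ * (2 ^ j * T) ^ 2 := by
        have : b + ℓ - (a - ℓ) = 3 * ℓ := by linarith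
        rw [this, pow_succ]; field_simp; ring
      have e2 : ((2 : ℝ) ^ j * T) ^ (-τ₁) = (2 ^ j : ℝ) ^ (-τ₁) * T ^ (-τ₁) :=
        Real.mul_rpow hP.le hT.le
      have e3 : ((2 : ℝ) ^ j * T) ^ 2 * ((2 : ℝ) ^ j * T) ^ (-τ₁) = β ^ j * T ^ (2 - τ₁) := by
        rw [← Real.rpow_natCast _ 2, ← Real.rpow_add (by positivity),
          Real.mul_rpow hP.le hT.le, hβ, ← Real.rpow_natCast 2 j, ← Real.rpow_natCast _ j,
          ← Real.rpow_mul (by norm_num), ← Real.rpow_mul (by norm_num)]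
        congr 2
        · push_cast; ring
      have e4 : (2 ^ j : ℝ) ^ (-τ₁) ≤ β ^ j := by
        rw [hβ, ← Real.rpow_natCast 2 j, ← Real.rpow_natCast _ j,
          ← Real.rpow_mul (by norm_num), ← Real.rpow_mul (by norm_num)]
        apply Real.rpow_le_rpow_of_exponent_le (by norm_num)
        nlinarith [(Nat.cast_nonneg j : (0 : ℝ) ≤ j)]
      rw [e1]
      have hb : 0 < β ^ j := by positivity
      calc (1 + 12 * ℓ * (2 ^ j * T) ^ 2) * (2 * ε j)
          = 4 * ((2 : ℝ) ^ j * T) ^ (-τ₁)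
            + 48 * ℓ * (((2 : ℝ) ^ j * T) ^ 2 * ((2 : ℝ) ^ j * T) ^ (-τ₁)) := by
            simp only [ε]; ring
        _ = 4 * ((2 ^ j : ℝ) ^ (-τ₁) * T ^ (-τ₁)) + 48 * ℓ * (β ^ j * T ^ (2 - τ₁)) := by
            rw [e3, e2]
        _ ≤ 4 * (β ^ j * (η * ℓ)) + 48 * ℓ * (β ^ j * η) := by gcongr
        _ = 52 * η * ℓ * β ^ j := by ring
  calc _ ≤ volume (⋃ j, ⋃ x ∈ F j, Metric.closedBall x (ε j)) := measure_mono hsub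
    _ ≤ ∑' j, volume (⋃ x ∈ F j, Metric.closedBall x (ε j)) := measure_iUnion_le _
    _ ≤ ∑' j, ENNReal.ofReal (52 * η * ℓ * β ^ j) := ENNReal.tsum_le_tsum hblock
    _ = ENNReal.ofReal (∑' j, 52 * η * ℓ * β ^ j) :=
      (ENNReal.ofReal_tsum_of_nonneg (fun j => by positivity)
        ((summable_geometric_of_lt_one hβ0.le hβ1).mul_left _)).symm
    _ = ENNReal.ofReal (ℓ / 8) := by
      rw [tsum_mul_left, tsum_geometric_of_lt_one hβ0.le hβ1, hη]
      have : 1 - β ≠ 0 := by linarith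
      congr 1; field_simp; norm_num

/-- Beyond some denominator, the bad set covers at most an eighth of each cell.  The hypothesis
`τ₂ < τ₁ (τ₁ - 2)` says precisely that the first dangerous balls, of radius about
`q^(-τ₁(τ₁-1))`, are much shorter than the cell, of length `q^(-(τ₁+τ₂))`. -/
theorem eventually_bad_small (τ₁ τ₂ : ℝ) (hτ₁ : 2 < τ₁) (hτ₂pos : 0 < τ₂)
    (hτ₂ : τ₂ < τ₁ * (τ₁ - 2)) :
    ∃ q₀ : ℕ, ∀ ρ : ℚ, q₀ ≤ ρ.den → 4 ≤ (ρ.den : ℝ) ^ (τ₁ - 2) ∧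
      volume (cell τ₁ τ₂ ρ ∩ badSet τ₁ ρ.den) ≤
        ENNReal.ofReal ((ρ.den : ℝ) ^ (-(τ₁ + τ₂)) / 8) := by
  set η : ℝ := (1 - 2 ^ (-(τ₁ - 2))) / 416 with hη
  have hη0 : 0 < η := by
    have : (2 : ℝ) ^ (-(τ₁ - 2)) < 1 :=
      Real.rpow_lt_one_of_one_lt_of_neg (by norm_num) (by linarith)
    apply div_pos <;> linarith
  have e1 := eventually_rpow_le 2 (a := -τ₂) (b := 0) (by linarith)
  have e2 := eventually_rpow_le 4 (a := 0) (b := τ₁ - 2) (by linarith)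
  have e3 := eventually_rpow_le (2 ^ τ₁ / η) (a := -(τ₁ * (τ₁ - 1))) (b := -(τ₁ + τ₂))
    (by nlinarith)
  have e4 := eventually_rpow_le (2 ^ (τ₁ - 2) / η) (a := (τ₁ - 1) * (2 - τ₁)) (b := 0)
    (by nlinarith)
  obtain ⟨q₀, hq₀⟩ := eventually_atTop.1 (e1.and (e2.and (e3.and e4)))
  refine ⟨q₀, fun ρ hρ => ?_⟩
  obtain ⟨h1, h2, h3, h4⟩ := hq₀ ρ.den hρ
  have hq : (0 : ℝ) < ρ.den := by exact_mod_cast ρ.den_pos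
  rw [Real.rpow_zero] at h1 h2 h4
  rw [mul_one] at h2
  refine ⟨h2, ?_⟩
  set T : ℝ := (ρ.den : ℝ) ^ (τ₁ - 1) / 2 with hTdef
  have hT : 0 < T := by positivity
  have hTpow : ∀ c : ℝ, T ^ c = 2 ^ (-c) * (ρ.den : ℝ) ^ ((τ₁ - 1) * c) := by
    intro c
    rw [hTdef, div_eq_mul_inv, Real.mul_rpow (by positivity) (by norm_num), ← Real.rpow_mul hq.le,
      Real.inv_rpow (by norm_num), ← Real.rpow_neg (by norm_num), mul_comm]
  have hT1 : T ^ (-τ₁) ≤ η * (ρ.den : ℝ) ^ (-(τ₁ + τ₂)) := by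
    rw [hTpow, neg_neg, show (τ₁ - 1) * -τ₁ = -(τ₁ * (τ₁ - 1)) by ring]
    rw [div_mul_eq_mul_div, div_le_iff₀ hη0] at h3
    linarith
  have hT2 : T ^ (2 - τ₁) ≤ η := by
    rw [hTpow, neg_sub]
    rw [div_mul_eq_mul_div, div_le_iff₀ hη0] at h4
    linarith
  refine le_trans (measure_mono ?_) (dyadic_bad
    (a := (ρ : ℝ) + (1 - (ρ.den : ℝ) ^ (-τ₂)) * (ρ.den : ℝ) ^ (-τ₁))
    (b := (ρ : ℝ) + (ρ.den : ℝ) ^ (-τ₁)) hτ₁ (by positivity) ?_ hT hη hT1 hT2)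
  · rintro y ⟨hy, s, hs, r, hr⟩
    refine ⟨hy, s, ?_, r, hr.le⟩
    by_contra! hcon
    exact absurd hr (not_lt.2 (not_bad_of_le hτ₁ ρ (by linarith) h2 hy hs hcon.le r))
  · have e : (ρ.den : ℝ) ^ (-(τ₁ + τ₂)) = (ρ.den : ℝ) ^ (-τ₂) * (ρ.den : ℝ) ^ (-τ₁) := by
      rw [← Real.rpow_add hq]; ring_nf
    rw [e]; ring

/-- A rational close to a point outside the bad set is a successor.  Fractions of intermediate
denominator `s` are kept away by the point `x` when `s^(-τ₁) ≥ h`, and by `ρ'` itself, through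
`|ρ' - r/s| ≥ 1/(s ρ'.den)`, when `s^(-τ₁) < h`. -/
theorem isChild_of_not_bad {τ₁ τ₂ h N x : ℝ} (hτ₁ : 2 < τ₁) (hτ₂ : 0 < τ₂) (ρ ρ' : ℚ)
    (hq : ρ.den < ρ'.den) (hN : (ρ'.den : ℝ) ≤ N) (h2 : 4 ≤ (ρ.den : ℝ) ^ (τ₁ - 2))
    (hsub : Icc (x - h) (x + h) ⊆ cell τ₁ τ₂ ρ) (hbad : x ∉ badSet τ₁ ρ.den)
    (hdist : |x - ρ'| + (ρ'.den : ℝ) ^ (-τ₁) ≤ h) (hh : h ^ ((τ₁ - 1) / τ₁) ≤ 1 / (2 * N)) :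
    IsChild τ₁ τ₂ ρ ρ' := by
  have hd : (0 : ℝ) < ρ.den := by exact_mod_cast ρ.den_pos
  have hd' : (0 : ℝ) < ρ'.den := by exact_mod_cast ρ'.den_pos
  have hd1 : (1 : ℝ) ≤ ρ'.den := by exact_mod_cast ρ'.den_pos
  have hω : (ρ'.den : ℝ) ^ (-τ₂) ≤ 1 := Real.rpow_le_one_of_one_le_of_nonpos hd1 (by linarith)
  have hΨ : 0 < (ρ'.den : ℝ) ^ (-τ₁) := by positivity
  have hcell : ∀ y ∈ cell τ₁ τ₂ ρ', |y - ρ'| ≤ (ρ'.den : ℝ) ^ (-τ₁) := by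
    intro y hy
    have h3 := hy.1
    have h4 := hy.2
    have h5 : 0 ≤ (1 - (ρ'.den : ℝ) ^ (-τ₂)) * (ρ'.den : ℝ) ^ (-τ₁) :=
      mul_nonneg (by linarith) hΨ.le
    rw [abs_le]; constructor <;> linarith
  have hyx : ∀ y ∈ cell τ₁ τ₂ ρ', |y - x| ≤ h := by
    intro y hy
    have h3 := abs_sub_le y (ρ' : ℝ) x
    rw [abs_sub_comm (ρ' : ℝ) x] at h3
    linarith [hcell y hy]
  refine ⟨hq, fun y hy => hsub ?_, fun y hy s hs hs' r => ?_⟩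
  · have := abs_le.1 (hyx y hy)
    constructor <;> linarith [this.1, this.2]
  have hs0 : 0 < s := by omega
  have hs0' : (0 : ℝ) < s := by exact_mod_cast hs0
  have hsq : (s : ℝ) ≤ ρ'.den := by exact_mod_cast hs'
  by_cases hr : (r : ℝ) / s = ρ'
  · have hdvd := den_dvd_of_eq ρ' r s hr
    have hse : s = ρ'.den := le_antisymm hs' (Nat.le_of_dvd hs0 hdvd)
    rw [hr, hse]
    have h3 := hy.1
    exact le_trans (by linarith) (le_abs_self _)
  have hΨs : 0 < (s : ℝ) ^ (-τ₁) := by positivity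
  have hωs : 0 < (s : ℝ) ^ (-τ₂) := by positivity
  suffices hmain : (s : ℝ) ^ (-τ₁) ≤ |y - (r : ℝ) / s| by nlinarith
  rcases le_or_gt h ((s : ℝ) ^ (-τ₁)) with hcase | hcase
  · have h3 : 2 * (s : ℝ) ^ (-τ₁) ≤ |x - (r : ℝ) / s| := by
      by_contra! hcon
      exact hbad ⟨s, hs, r, hcon⟩
    have h4 := abs_sub_le x y ((r : ℝ) / s)
    rw [abs_sub_comm x y] at h4
    linarith [hyx y hy]
  · have h3 := frac_sep' ρ' r s hs0 hr
    have h4 : (ρ'.den : ℝ) ^ (-τ₁) ≤ 1 / (2 * ((ρ'.den : ℝ) * s)) := by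
      have e : (ρ'.den : ℝ) ^ (-τ₁) * (ρ'.den * ρ'.den * (ρ'.den : ℝ) ^ (τ₁ - 2)) = 1 := by
        rw [← sq, ← Real.rpow_natCast, ← Real.rpow_add hd', ← Real.rpow_add hd']; simp
      have hqq : (ρ.den : ℝ) ≤ ρ'.den := by exact_mod_cast hq.le
      have h6 : (2 : ℝ) ≤ (ρ'.den : ℝ) ^ (τ₁ - 2) := by
        have := h2.trans (Real.rpow_le_rpow hd.le hqq (by linarith))
        linarith
      rw [le_div_iff₀ (by positivity)]
      calc (ρ'.den : ℝ) ^ (-τ₁) * (2 * ((ρ'.den : ℝ) * s))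
          = (ρ'.den : ℝ) ^ (-τ₁) * ((ρ'.den : ℝ) * s * 2) := by ring
        _ ≤ (ρ'.den : ℝ) ^ (-τ₁) * (ρ'.den * ρ'.den * (ρ'.den : ℝ) ^ (τ₁ - 2)) := by gcongr
        _ = 1 := e
    have h5 : (s : ℝ) ^ (-τ₁) ≤ 1 / (2 * ((ρ'.den : ℝ) * s)) := by
      have e1 : (s : ℝ) ^ (-τ₁) = ((s : ℝ) ^ (-τ₁)) ^ ((τ₁ - 1) / τ₁) * (s : ℝ)⁻¹ := by
        rw [← Real.rpow_mul hs0'.le, ← Real.rpow_neg_one, ← Real.rpow_add hs0']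
        congr 1; field_simp; ring
      have e2 : ((s : ℝ) ^ (-τ₁)) ^ ((τ₁ - 1) / τ₁) ≤ 1 / (2 * ρ'.den) := by
        refine (Real.rpow_le_rpow hΨs.le hcase.le (div_nonneg (by linarith) (by linarith))).trans
          (hh.trans ?_)
        gcongr
      rw [e1]
      calc _ ≤ 1 / (2 * (ρ'.den : ℝ)) * (s : ℝ)⁻¹ := by gcongr
        _ = 1 / (2 * ((ρ'.den : ℝ) * s)) := by field_simp
    have h6 : 1 / ((ρ'.den : ℝ) * s) =
        1 / (2 * ((ρ'.den : ℝ) * s)) + 1 / (2 * ((ρ'.den : ℝ) * s)) := by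
      field_simp; norm_num
    have h7 := abs_sub_le (ρ' : ℝ) y ((r : ℝ) / s)
    rw [abs_sub_comm (ρ' : ℝ) y] at h7
    linarith [hcell y hy]

/-- The points within `1/(k N)` of a fraction of denominator `k ≤ M` in an interval of length `3ℓ`:
the interval holds at most `1 + 3ℓk` fractions of denominator `k`. -/
theorem small_den_cover {A B ℓ : ℝ} (hℓ : 0 < ℓ) (hAB : B - A = 3 * ℓ) (M N : ℕ) (hMN : M ≤ N)
    (hN : 0 < N) :
    volume (⋃ k ∈ Finset.Icc 1 M, ⋃ x ∈ {x | x ∈ Icc A B ∧ ∃ p : ℤ, x = (p : ℝ) / (k : ℕ)},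
      Metric.closedBall x (1 / ((k : ℝ) * N))) ≤
      ENNReal.ofReal (2 * (1 + Real.log N) / N + 6 * ℓ * (M / N)) := by
  have hN' : (0 : ℝ) < N := by exact_mod_cast hN
  refine (measure_biUnion_finset_le _ _).trans ?_
  have hterm : ∀ k ∈ Finset.Icc 1 M,
      volume (⋃ x ∈ {x | x ∈ Icc A B ∧ ∃ p : ℤ, x = (p : ℝ) / (k : ℕ)},
        Metric.closedBall x (1 / ((k : ℝ) * N))) ≤
      ENNReal.ofReal (2 / N * (k : ℝ)⁻¹ + 6 * ℓ / N) := by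
    intro k hk
    have hk0 : 0 < k := (Finset.mem_Icc.1 hk).1
    have hk' : (0 : ℝ) < k := by exact_mod_cast hk0
    refine (separated_cover (δ := 1 / (k : ℝ)) (a := A) (b := B) (by positivity) (by linarith)
      (by positivity) (fun x hx => hx.1) ?_).trans (ENNReal.ofReal_le_ofReal (le_of_eq ?_))
    · rintro x ⟨_, p, rfl⟩ y ⟨_, p', rfl⟩ hxy
      rw [div_lt_div_iff_of_pos_right hk'] at hxy
      have h1 : p + 1 ≤ p' := by
        have : p < p' := by exact_mod_cast hxy
        omega
      have h2 : (p : ℝ) + 1 ≤ p' := by exact_mod_cast h1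
      rw [← sub_div]
      gcongr
      linarith
    · rw [hAB]; field_simp; ring
  refine (Finset.sum_le_sum hterm).trans ?_
  rw [← ENNReal.ofReal_sum_of_nonneg (fun k _ => by positivity)]
  apply ENNReal.ofReal_le_ofReal
  rw [Finset.sum_add_distrib, ← Finset.mul_sum, Finset.sum_const, Nat.card_Icc, nsmul_eq_mul]
  have hharm : ∑ k ∈ Finset.Icc 1 M, (k : ℝ)⁻¹ ≤ 1 + Real.log N := by
    have h1 : ∑ k ∈ Finset.Icc 1 M, (k : ℝ)⁻¹ ≤ ∑ k ∈ Finset.Icc 1 N, (k : ℝ)⁻¹ :=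
      Finset.sum_le_sum_of_subset_of_nonneg (Finset.Icc_subset_Icc_right hMN)
        (fun k _ _ => by positivity)
    have h2 := harmonic_le_one_add_log N
    rw [harmonic_eq_sum_Icc] at h2
    push_cast at h2
    exact h1.trans h2
  have e : ((M + 1 - 1 : ℕ) : ℝ) * (6 * ℓ / N) = 6 * ℓ * (M / N) := by
    rw [Nat.add_sub_cancel]; ring
  rw [e]
  calc _ ≤ 2 / (N : ℝ) * (1 + Real.log N) + 6 * ℓ * (M / N) := by gcongr
    _ = _ := by ring

theorem finite_rat_den_le (K : ℝ) (N : ℕ) : {ρ : ℚ | ρ.den ≤ N ∧ |(ρ : ℝ)| ≤ K}.Finite := by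
  have hfin : ((fun p : ℤ × ℕ => (p.1 : ℚ) / (p.2 : ℚ)) ''
      (Icc (-⌈K * N⌉) ⌈K * N⌉ ×ˢ Icc 0 N)).Finite :=
    ((finite_Icc _ _).prod (finite_Icc _ _)).image _
  refine hfin.subset ?_
  rintro ρ ⟨h1, h2⟩
  refine ⟨(ρ.num, ρ.den), ⟨?_, ⟨Nat.zero_le _, h1⟩⟩, Rat.num_div_den ρ⟩
  have hd : (0 : ℝ) < ρ.den := by exact_mod_cast ρ.den_pos
  have hdN : (ρ.den : ℝ) ≤ N := by exact_mod_cast h1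
  have e : (ρ.num : ℝ) = ρ * ρ.den := by
    rw [Rat.cast_def (K := ℝ) ρ]; field_simp
  have h3 : |(ρ.num : ℝ)| ≤ K * N := by
    rw [e, abs_mul, abs_of_pos hd]
    have := abs_nonneg (ρ : ℝ)
    gcongr
    linarith
  have h4 := abs_le.1 (h3.trans (Int.le_ceil (K * N)))
  constructor
  · exact_mod_cast h4.1
  · exact_mod_cast h4.2

/-- The successors of `ρ` with denominators in `[N/96, N]`.  By Dirichlet's theorem every point
`y` of the middle half of the cell is within `1/(k N)` of a fraction of denominator `k ≤ N`.  The
points for which `k < N/96`, and the bad points, together make up at most a quarter of the cell;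
the others are covered by balls of radius `96/N²` about rationals which are successors. -/
theorem supply_core {τ₁ τ₂ ℓ : ℝ} (hτ₁ : 2 < τ₁) (hτ₂ : 0 < τ₂) (ρ : ℚ) (N : ℕ)
    (hℓ : ℓ = (ρ.den : ℝ) ^ (-(τ₁ + τ₂))) (h2 : 4 ≤ (ρ.den : ℝ) ^ (τ₁ - 2))
    (hbad : volume (cell τ₁ τ₂ ρ ∩ badSet τ₁ ρ.den) ≤ ENNReal.ofReal (ℓ / 8))
    (hN0 : 0 < N) (hN1 : (ρ.den : ℝ) < N / 96) (hN2 : 1 / (N : ℝ) ≤ ℓ)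
    (hN3 : 2 * (1 + Real.log N) / N ≤ ℓ / 16)
    (hN4 : ((N : ℝ) / 96) ^ (-τ₁) ≤ 96 / (N : ℝ) ^ 2) (hN5 : 192 / (N : ℝ) ^ 2 ≤ ℓ / 4)
    (hN6 : (192 / (N : ℝ) ^ 2) ^ ((τ₁ - 1) / τ₁) ≤ 1 / (2 * N)) :
    ∃ R : Finset ℚ, 1 / 768 * ℓ * (N : ℝ) ^ 2 ≤ R.card ∧
      ∀ ρ' ∈ R, 1 / 768 * (N : ℝ) ≤ ρ'.den ∧ ρ'.den ≤ N ∧ IsChild τ₁ τ₂ ρ ρ' := by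
  have hN' : (0 : ℝ) < N := by exact_mod_cast hN0
  have hq : (0 : ℝ) < ρ.den := by exact_mod_cast ρ.den_pos
  have hℓ0 : 0 < ℓ := by rw [hℓ]; positivity
  obtain ⟨a, b, hcell, hab⟩ : ∃ a b, cell τ₁ τ₂ ρ = Icc a b ∧ b - a = ℓ := by
    refine ⟨_, _, rfl, ?_⟩
    have e : (ρ.den : ℝ) ^ (-(τ₁ + τ₂)) = (ρ.den : ℝ) ^ (-τ₂) * (ρ.den : ℝ) ^ (-τ₁) := by
      rw [← Real.rpow_add hq]; ring_nf
    rw [hℓ, e]; ring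
  set J : Set ℝ := Icc (a + ℓ / 4) (b - ℓ / 4) with hJ
  let S : Set ℚ := {ρ' | ρ'.den ≤ N ∧ (N : ℝ) / 96 ≤ ρ'.den ∧
    ∃ x ∈ J, x ∉ badSet τ₁ ρ.den ∧ |x - ρ'| ≤ 1 / ((ρ'.den : ℝ) * N)}
  have hinv : ∀ ρ' : ℚ, 1 / ((ρ'.den : ℝ) * N) ≤ ℓ := by
    intro ρ'
    have h1 : (1 : ℝ) ≤ ρ'.den := by exact_mod_cast ρ'.den_pos
    refine le_trans ?_ hN2
    gcongr
    nlinarith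
  have hinv2 : ∀ ρ' : ℚ, (N : ℝ) / 96 ≤ ρ'.den → 1 / ((ρ'.den : ℝ) * N) ≤ 96 / (N : ℝ) ^ 2 := by
    intro ρ' h
    calc 1 / ((ρ'.den : ℝ) * N) ≤ 1 / ((N : ℝ) / 96 * N) := by gcongr
      _ = 96 / (N : ℝ) ^ 2 := by field_simp
  have hfin : S.Finite := by
    refine (finite_rat_den_le (|a| + |b| + ℓ) N).subset ?_
    rintro ρ' ⟨h3, _, x, hx, _, hxρ⟩
    refine ⟨h3, ?_⟩
    have h4 := abs_le.1 (hxρ.trans (hinv ρ'))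
    have := hx.1
    have := hx.2
    rw [abs_le]
    constructor <;> linarith [neg_abs_le a, le_abs_self b, abs_nonneg a, abs_nonneg b, h4.1, h4.2]
  refine ⟨hfin.toFinset, ?_, ?_⟩
  · set M : ℕ := ⌊(N : ℝ) / 96⌋₊ with hM
    have hMle : (M : ℝ) ≤ N / 96 := Nat.floor_le (by positivity)
    have hMN : M ≤ N := by
      have : (M : ℝ) ≤ N := by linarith
      exact_mod_cast this
    have hcover : J ⊆ (cell τ₁ τ₂ ρ ∩ badSet τ₁ ρ.den) ∪
        ((⋃ k ∈ Finset.Icc 1 M,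
          ⋃ x ∈ {x | x ∈ Icc (a - ℓ) (b + ℓ) ∧ ∃ p : ℤ, x = (p : ℝ) / (k : ℕ)},
          Metric.closedBall x (1 / ((k : ℝ) * N))) ∪
        (⋃ ρ' ∈ hfin.toFinset, Metric.closedBall (ρ' : ℝ) (96 / (N : ℝ) ^ 2))) := by
      intro y hy
      have hy1 := hy.1
      have hy2 := hy.2
      by_cases hyb : y ∈ badSet τ₁ ρ.den
      · refine Or.inl ⟨?_, hyb⟩
        rw [hcell]
        constructor <;> linarith
      right
      obtain ⟨ρ', h3, h4⟩ := Real.exists_rat_abs_sub_le_and_den_le y hN0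
      have hd : (0 : ℝ) < ρ'.den := by exact_mod_cast ρ'.den_pos
      have h5 : |y - ρ'| ≤ 1 / ((ρ'.den : ℝ) * N) := by
        refine h3.trans ?_
        rw [mul_comm (ρ'.den : ℝ)]
        gcongr
        linarith
      rcases le_or_gt ((N : ℝ) / 96) ρ'.den with h6 | h6
      · right
        simp only [mem_iUnion]
        refine ⟨ρ', hfin.mem_toFinset.2 ⟨h4, h6, y, hy, hyb, h5⟩, ?_⟩
        rw [Metric.mem_closedBall, Real.dist_eq]
        exact h5.trans (hinv2 ρ' h6)
      · left
        simp only [mem_iUnion]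
        have h7 := abs_le.1 (h5.trans (hinv ρ'))
        refine ⟨ρ'.den, Finset.mem_Icc.2 ⟨ρ'.den_pos, Nat.le_floor h6.le⟩, (ρ' : ℝ),
          ⟨⟨by linarith, by linarith⟩, ρ'.num, Rat.cast_def ρ'⟩, ?_⟩
        rw [Metric.mem_closedBall, Real.dist_eq]
        exact h5
    have hvol := (measure_mono (μ := volume) hcover).trans ((measure_union_le _ _).trans
      (add_le_add hbad ((measure_union_le _ _).trans
        (add_le_add (small_den_cover hℓ0 (by linarith) M N hMN hN0)
          (measure_biUnion_finset_le _ _)))))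
    simp only [Real.volume_closedBall, Finset.sum_const, nsmul_eq_mul] at hvol
    have hlog : 0 ≤ Real.log N := Real.log_natCast_nonneg N
    rw [hJ, Real.volume_Icc, ← ENNReal.ofReal_natCast, ← ENNReal.ofReal_mul (Nat.cast_nonneg _),
      ← ENNReal.ofReal_add (by positivity) (by positivity),
      ← ENNReal.ofReal_add (by positivity) (by positivity),
      ENNReal.ofReal_le_ofReal_iff (by positivity)] at hvol
    have h8 : 6 * ℓ * ((M : ℝ) / N) ≤ ℓ / 16 := by
      have : (M : ℝ) / N ≤ 1 / 96 := by rw [div_le_iff₀ hN']; linarith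
      nlinarith
    have h9 : ℓ / 4 ≤ hfin.toFinset.card * (2 * (96 / (N : ℝ) ^ 2)) := by linarith
    have e : (hfin.toFinset.card : ℝ) * (2 * (96 / (N : ℝ) ^ 2)) =
      192 * hfin.toFinset.card / (N : ℝ) ^ 2 := by ring
    rw [e, le_div_iff₀ (by positivity)] at h9
    linarith
  · intro ρ' hρ'
    obtain ⟨h3, h4, x, hx, hxb, hxρ⟩ := hfin.mem_toFinset.1 hρ'
    have h3' : (ρ'.den : ℝ) ≤ N := by exact_mod_cast h3
    refine ⟨by linarith, h3, isChild_of_not_bad hτ₁ hτ₂ ρ ρ' ?_ h3' h2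
      (h := 192 / (N : ℝ) ^ 2) (x := x) ?_ hxb ?_ hN6⟩
    · have : (ρ.den : ℝ) < ρ'.den := by linarith
      exact_mod_cast this
    · rw [hcell]
      exact Icc_subset_Icc (by linarith [hx.1]) (by linarith [hx.2])
    · have h5 : (ρ'.den : ℝ) ^ (-τ₁) ≤ ((N : ℝ) / 96) ^ (-τ₁) :=
        Real.rpow_le_rpow_of_nonpos (by positivity) h4 (by linarith)
      have e : 192 / (N : ℝ) ^ 2 = 96 / (N : ℝ) ^ 2 + 96 / (N : ℝ) ^ 2 := by ring
      linarith [hinv2 ρ' h4]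

theorem exists_supply (τ₁ τ₂ : ℝ) (hτ₁ : 2 < τ₁) (hτ₂pos : 0 < τ₂)
    (hτ₂ : τ₂ < τ₁ * (τ₁ - 2)) : ∃ q₀, Supply τ₁ τ₂ (1 / 768) (τ₁ + τ₂) q₀ := by
  obtain ⟨q₀, hq₀⟩ := eventually_bad_small τ₁ τ₂ hτ₁ hτ₂pos hτ₂
  refine ⟨q₀, fun ρ hρ => ?_⟩
  obtain ⟨h2, hbad⟩ := hq₀ ρ hρ
  have hq : (0 : ℝ) < ρ.den := by exact_mod_cast ρ.den_pos
  set ℓ : ℝ := (ρ.den : ℝ) ^ (-(τ₁ + τ₂)) with hℓ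
  have hℓ0 : 0 < ℓ := by positivity
  have t1 : ∀ᶠ N : ℕ in atTop, (96 * (ρ.den : ℝ)) < N :=
    tendsto_natCast_atTop_atTop.eventually_gt_atTop _
  have t2 : ∀ᶠ N : ℕ in atTop, 1 / ℓ ≤ (N : ℝ) :=
    tendsto_natCast_atTop_atTop.eventually_ge_atTop _
  have t3 : ∀ᶠ N : ℕ in atTop, 2 * (1 + Real.log N) / N ≤ ℓ / 16 := by
    have h1 : Tendsto (fun x : ℝ => Real.log x / x) atTop (nhds 0) :=
      Real.isLittleO_log_id_atTop.tendsto_div_nhds_zero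
    have h3 : Tendsto (fun x : ℝ => 2 * (x⁻¹ + Real.log x / x)) atTop (nhds (2 * (0 + 0))) :=
      (tendsto_inv_atTop_zero.add h1).const_mul 2
    have h4 := (h3.comp tendsto_natCast_atTop_atTop (α := ℕ)).eventually_le_const
      (show 2 * (0 + 0) < ℓ / 16 by linarith)
    filter_upwards [h4] with N hN
    refine le_trans (le_of_eq ?_) hN
    simp only [Function.comp]
    ring
  have t4 := eventually_rpow_le ((96 : ℝ)⁻¹ ^ (-τ₁) / 96) (a := -τ₁) (b := -2) (by linarith)
  have t5 := eventually_rpow_le (768 / ℓ) (a := -2) (b := 0) (by norm_num)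
  have hexp : -2 * ((τ₁ - 1) / τ₁) < -1 := by
    have : 1 < 2 * ((τ₁ - 1) / τ₁) := by
      rw [← mul_div_assoc, lt_div_iff₀ (by linarith)]; linarith
    linarith
  have t6 := eventually_rpow_le (2 * 192 ^ ((τ₁ - 1) / τ₁)) hexp
  obtain ⟨N₀, hN₀⟩ := eventually_atTop.1
    ((eventually_gt_atTop 0).and (t1.and (t2.and (t3.and (t4.and (t5.and t6))))))
  refine ⟨N₀, fun N hN => ?_⟩
  obtain ⟨hN0, h1, h3, h4, h5, h6, h7⟩ := hN₀ N hN
  have hN' : (0 : ℝ) < N := by exact_mod_cast hN0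
  have hpow : (N : ℝ) ^ (-2 : ℝ) = 1 / (N : ℝ) ^ 2 := by
    rw [Real.rpow_neg hN'.le, one_div]; norm_num
  refine supply_core hτ₁ hτ₂pos ρ N hℓ h2 hbad hN0 (by linarith) ?_ h4 ?_ ?_ ?_
  · rw [div_le_iff₀ hℓ0] at h3
    rw [div_le_iff₀ hN']; linarith
  · rw [hpow] at h5
    rw [div_eq_mul_inv (N : ℝ), Real.mul_rpow hN'.le (by norm_num)]
    have e : 96 / (N : ℝ) ^ 2 = 96 * (1 / (N : ℝ) ^ 2) := by ring
    rw [e]; linarith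
  · rw [hpow, Real.rpow_zero, div_mul_eq_mul_div, div_le_iff₀ hℓ0] at h6
    have e : 192 / (N : ℝ) ^ 2 = 768 * (1 / (N : ℝ) ^ 2) / 4 := by ring
    rw [e]; linarith
  · rw [Real.rpow_mul hN'.le, hpow, Real.rpow_neg_one] at h7
    have e : 192 / (N : ℝ) ^ 2 = 192 * (1 / (N : ℝ) ^ 2) := by ring
    have e2 : 1 / (2 * (N : ℝ)) = (N : ℝ)⁻¹ / 2 := by field_simp
    rw [e, e2, Real.mul_rpow (by norm_num) (by positivity)]
    linarith

end Supply

/-! ### The dimension formula -/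

/-- **Theorem.** For `τ₁ > 2`, `Ψ(q) = q^(−τ₁)` and `ω(q) = q^(−τ₂)` with
`0 < τ₂ < τ₁(τ₁ − 2)`, one has `dim_H(E(Ψ,ω)) = 2/(τ₁ + τ₂)`. -/
theorem dimH_ESet_rpow (τ₁ τ₂ : ℝ) (hτ₁ : 2 < τ₁) (hτ₂pos : 0 < τ₂)
    (hτ₂ : τ₂ < τ₁ * (τ₁ - 2)) :
    dimH (ESet (fun q : ℝ => q ^ (-τ₁)) (fun q : ℝ => q ^ (-τ₂))) =
      ENNReal.ofReal (2 / (τ₁ + τ₂)) := by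
  refine le_antisymm (dimH_ESet_le τ₁ τ₂ hτ₁ hτ₂pos) ?_
  obtain ⟨q₀, hsup⟩ := exists_supply τ₁ τ₂ hτ₁ hτ₂pos hτ₂
  have hσ : 0 < τ₁ + τ₂ := by linarith
  refine ENNReal.le_of_forall_nnreal_lt fun s hs => ?_
  rcases eq_or_ne s 0 with rfl | hs0
  · simp
  have hs' : (s : ℝ) < 2 / (τ₁ + τ₂) := by
    rwa [← ENNReal.ofReal_coe_nnreal, ENNReal.ofReal_lt_ofReal_iff (by positivity)] at hs
  have hsσ : (s : ℝ) * (τ₁ + τ₂) < 2 := by rwa [lt_div_iff₀ hσ] at hs'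
  have hs1 : s ≤ 1 := by
    have h1 : 2 / (τ₁ + τ₂) ≤ 1 := by rw [div_le_one hσ]; linarith
    have : (s : ℝ) ≤ 1 := by linarith
    exact_mod_cast this
  exact le_dimH_of_supply τ₁ τ₂ (1 / 768) (τ₁ + τ₂) s q₀ hτ₁ hτ₂pos (by norm_num) hσ
    (pos_iff_ne_zero.2 hs0) hs1 hsσ hsup
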